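/- arXiv:1504.07506 — 2 statements merged into one kernel-verified Lean document; each statement's English description precedes it below -/
import Mathlib

section
/- Let G be a finite group, H a subgroup of G of index n ≥ 2, F a field of characteristic p > 0, V an H-module of finite dimension a over F, and S a submodule of the induced module V↑G = F[G] ⊗_{F[H]} V. If G contains a soluble subgroup N acting transitively on the set of right cosets of H in G, then d_G(S) ≤ a·E_sol(n,p) = a·min{w*(n), n_p}. -/
/-- `dMod G S` is `d_G(S)`: the minimal number of elements required to generate the
(`G`-stable) submodule `S` as a `G`-module. -/
noncomputable def dMod (G : Type*) [Group G] {F W : Type*} [Field F] [AddCommGroup W]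
    [Module F W] [DistribMulAction G W] (S : Submodule F W) : ℕ :=
  sInf {m : ℕ | ∃ T : Finset W, T.card = m ∧ (T : Set W) ⊆ (S : Set W) ∧
    Submodule.span F {w : W | ∃ g : G, ∃ t ∈ T, w = g • t} = S}

/-- `K(n) = ω₁(n) − ω(n)`, where for `n = p₁^{r₁}⋯p_t^{r_t}`, `ω(n) = ∑ rᵢ` and
`ω₁(n) = ∑ rᵢ·pᵢ`. -/
def Kfun (n : ℕ) : ℕ :=
  (n.factorization.sum fun p r => r * p) - (n.factorization.sum fun _ r => r)

/-- `w*(n) = (n / 2^{K(n)}) · binom(K(n), ⌊K(n)/2⌋)`. -/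
noncomputable def wstar (n : ℕ) : ℝ :=
  (n : ℝ) / 2 ^ Kfun n * (Kfun n).choose (Kfun n / 2)

/-!
The subgroup `N` permutes the translates `φ ω` of `V`, whose sum is `W`. Fix a linear order on the
coset space `Ω`. The leading coefficients at `ω` of the vectors of an `N`-submodule `S` form a
subspace of `φ ω`, and a submodule of `S` with the same leading spaces is all of `S`. If some
element of `N` moves `α` to `β` and everything below `α` to something below `β`, it carries the
leading space at `α` into the one at `β`; so along a chain of such moves the leading spaces only
grow, and `dim V` elements of `S` account for all of them. Hence `d(S) ≤ dim V · c` as soon as `Ω`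
is covered by `c` chains.

For soluble `N` a good order is built from a normal series with abelian factors: every prime
factor `q` of `n` contributes a chain of length `q`, and moves in the base and in the fibre of
each step combine, so that `Ω` is covered by a product of such chains. Splitting products of two
chains into hooks, one factor at a time, turns this product into at most `w*(n)` chains.

For the bound `n_p`, a Hall `p'`-subgroup `Q` of `N` has at most `n_p` orbits on `Ω`, so `W` is
generated over `Q` by `dim V · n_p` elements, and by Maschke's theorem so is its direct summand
`S`.
-/

section ChainCount

open Finset

/-- The operator `f ↦ (x ↦ f (x + 1) + f (x - 1))` on functions `ℤ → ℤ`. It turns the count of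
chains of a product of chains into that of its product with a two-element chain, because a grid
with `x` columns and two rows splits into chains with `x + 1` and `x - 1` elements. -/
def neighborSum (f : ℤ → ℤ) (x : ℤ) : ℤ :=
  f (x + 1) + f (x - 1)

/-- The number of chains in a symmetric chain decomposition of the product of a chain with `c`
elements and the Boolean lattice of rank `k`, extended to an odd function of `c : ℤ`. -/
def chainCount (k : ℕ) : ℤ → ℤ :=
  neighborSum^[k] Int.sign

/-- The sum of `f` over `c + q - 1, c + q - 3, …, c - q + 1`. For odd `f` and `c ≥ 0` this is the
sum of `f` over the lengths of the symmetric chains of a `c × q` grid, the terms of opposite sign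
cancelling. -/
def windowSum (q : ℕ) (f : ℤ → ℤ) (c : ℤ) : ℤ :=
  ∑ i ∈ range q, f (c + q - 1 - 2 * i)

/-- Among pairs of integers of the same parity with a fixed nonnegative sum, `f x + f y` does not
increase when `x` and `y` move apart. -/
def SpreadAntitone (f : ℤ → ℤ) : Prop :=
  ∀ ⦃c s : ℤ⦄, 0 ≤ c → 0 ≤ s → f (c + (s + 1)) + f (c - (s + 1)) ≤ f (c + (s - 1)) + f (c - (s - 1))

lemma neighborSum_odd {f : ℤ → ℤ} (hf : f.Odd) : (neighborSum f).Odd := fun x => by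
  simp only [neighborSum, show -x + 1 = -(x - 1) by ring, show -x - 1 = -(x + 1) by ring, hf _]
  ring

lemma spreadAntitone_neighborSum {f : ℤ → ℤ} (hf : SpreadAntitone f) :
    SpreadAntitone (neighborSum f) := by
  intro c s hc hs
  rcases hs.eq_or_lt with rfl | hs
  · simp only [zero_add, zero_sub, ← sub_eq_add_neg, sub_neg_eq_add, add_comm, le_refl]
  · have houter := hf hc (s := s + 1) (by lia)
    have hinner := hf hc (s := s - 1) (by lia)
    simp only [neighborSum]
    ring_nf at houter hinner ⊢
    lia

lemma spreadAntitone_sign : SpreadAntitone Int.sign := by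
  intro c s hc hs
  grind [Int.sign_eq_one_iff_pos, Int.sign_eq_neg_one_iff_neg, Int.sign_eq_zero_iff_zero]

lemma chainCount_odd (k : ℕ) : (chainCount k).Odd :=
  Function.Iterate.rec Function.Odd Int.sign_neg (fun _ hf => neighborSum_odd hf) k

lemma spreadAntitone_chainCount (k : ℕ) : SpreadAntitone (chainCount k) :=
  Function.Iterate.rec SpreadAntitone spreadAntitone_sign
    (fun _ hf => spreadAntitone_neighborSum hf) k

lemma neighborSum_iterate_apply (k : ℕ) (f : ℤ → ℤ) (x : ℤ) :
    neighborSum^[k] f x = ∑ i ∈ range (k + 1), (k.choose i : ℤ) * f (x + (k - i : ℕ) - i) := by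
  induction k generalizing f with
  | zero => simp
  | succ k ih =>
    rw [Function.iterate_succ_apply, ih,
      sum_choose_succ_mul (fun i j => f (x + (j : ℤ) - (i : ℤ))) k, ← sum_add_distrib]
    refine sum_congr rfl fun i hi => ?_
    have hik : k + 1 - i = k - i + 1 := Nat.succ_sub (mem_range_succ_iff.1 hi)
    rw [neighborSum, mul_add, hik]
    push_cast
    ring_nf

lemma chainCount_one (k : ℕ) : chainCount k 1 = k.choose (k / 2) := by
  have hdiff : ∀ i ∈ range (k + 1),
      ((1 + (k - i : ℕ) - i : ℤ).sign - (-1 + (k - i : ℕ) - i : ℤ).sign) =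
        (if k / 2 = i then 1 else 0) + (if (k + 1) / 2 = i then 1 else 0) := by
    intro i hi
    have := mem_range.1 hi
    grind [Int.sign_eq_one_iff_pos, Int.sign_eq_neg_one_iff_neg, Int.sign_eq_zero_iff_zero]
  have htwice : chainCount k 1 - chainCount k (-1) = k.choose (k / 2) + k.choose ((k + 1) / 2) := by
    simp only [chainCount, neighborSum_iterate_apply, ← sum_sub_distrib, ← mul_sub]
    rw [sum_congr rfl fun i hi => by rw [hdiff i hi]]
    simp only [mul_add, sum_add_distrib, mul_ite, mul_one, mul_zero, sum_ite_eq, mem_range]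
    rw [if_pos (by lia), if_pos (by lia)]
  have hsymm : k.choose ((k + 1) / 2) = k.choose (k / 2) := Nat.choose_symm_of_eq_add (by lia)
  have hodd := chainCount_odd k 1
  lia

lemma windowSum_succ (q : ℕ) (f : ℤ → ℤ) (c : ℤ) :
    windowSum (q + 1) f c = windowSum q f (c + 1) + f (c - q) := by
  simp only [windowSum, sum_range_succ]
  push_cast
  ring_nf

lemma windowSum_succ' (q : ℕ) (f : ℤ → ℤ) (c : ℤ) :
    windowSum (q + 1) f c = f (c + q) + windowSum q f (c - 1) := by
  simp only [windowSum, sum_range_succ', add_comm (f _)]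
  push_cast
  ring_nf

lemma windowSum_add_two (q : ℕ) (f : ℤ → ℤ) (c : ℤ) :
    windowSum (q + 2) f c = windowSum q f c + (f (c + (q + 1)) + f (c - (q + 1))) := by
  rw [windowSum_succ', windowSum_succ]
  push_cast
  ring_nf

lemma windowSum_neighborSum (q : ℕ) (f : ℤ → ℤ) (c : ℤ) :
    windowSum (q + 1) (neighborSum f) c = windowSum (q + 2) f c + windowSum q f c := by
  have hsplit : windowSum (q + 1) (neighborSum f) c =
      windowSum (q + 1) f (c + 1) + windowSum (q + 1) f (c - 1) := by
    simp only [windowSum, neighborSum, sum_add_distrib]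
    ring_nf
  rw [hsplit, windowSum_succ (q + 1), windowSum_succ q f (c - 1)]
  push_cast
  ring_nf

lemma windowSum_zero_right {f : ℤ → ℤ} (hf : f.Odd) (q : ℕ) : windowSum q f 0 = 0 := by
  induction q using Nat.twoStepInduction with
  | zero => simp [windowSum]
  | one => simpa [windowSum] using hf.map_zero
  | more q ih _ => rw [windowSum_add_two, ih, zero_add, zero_sub, hf, zero_add, add_neg_cancel]

lemma SpreadAntitone.mul_le_two_mul_windowSum {f : ℤ → ℤ} (hf : SpreadAntitone f) (q : ℕ) {c : ℤ}
    (hc : 0 ≤ c) : q * (f (c + (q + 1)) + f (c - (q + 1))) ≤ 2 * windowSum q f c := by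
  induction q using Nat.twoStepInduction with
  | zero => simp [windowSum]
  | one => simpa [windowSum, two_mul] using hf hc zero_le_one
  | more q ih _ =>
    have houter : f (c + (q + 3)) + f (c - (q + 3)) ≤ f (c + (q + 1)) + f (c - (q + 1)) := by
      convert hf hc (s := q + 2) (by lia) using 3 <;> ring
    rw [windowSum_add_two]
    push_cast
    rw [add_assoc (q : ℤ) 2 1, two_add_one_eq_three]
    nlinarith

lemma SpreadAntitone.two_pow_mul_windowSum_le {f : ℤ → ℤ} (hf : SpreadAntitone f) (q : ℕ) {c : ℤ}
    (hc : 0 ≤ c) : 2 ^ q * windowSum (q + 1) f c ≤ (q + 1) * neighborSum^[q] f c := by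
  induction q generalizing f with
  | zero => simp [windowSum]
  | succ q ih =>
    have hstep := ih (spreadAntitone_neighborSum hf)
    rw [windowSum_neighborSum] at hstep
    have hpair := hf.mul_le_two_mul_windowSum q hc
    have hwide : q * windowSum (q + 2) f c ≤ (q + 2) * windowSum q f c := by
      rw [windowSum_add_two]
      linarith
    refine le_of_mul_le_mul_left ?_ (by positivity : (0 : ℤ) < q + 1)
    rw [Function.iterate_succ_apply]
    push_cast
    calc (q + 1 : ℤ) * (2 ^ (q + 1) * windowSum (q + 2) f c)
        = 2 ^ q * ((q + 2) * windowSum (q + 2) f c + q * windowSum (q + 2) f c) := by ring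
      _ ≤ 2 ^ q * ((q + 2) * windowSum (q + 2) f c + (q + 2) * windowSum q f c) := by gcongr
      _ = (q + 2) * (2 ^ q * (windowSum (q + 2) f c + windowSum q f c)) := by ring
      _ ≤ (q + 2) * ((q + 1) * neighborSum^[q] (neighborSum f) c) := by gcongr
      _ = (q + 1) * ((q + 1 + 1) * neighborSum^[q] (neighborSum f) c) := by ring

lemma two_pow_mul_windowSum_chainCount_le (k q c : ℕ) :
    2 ^ q * windowSum (q + 1) (chainCount k) c ≤ (q + 1) * chainCount (q + k) c := by
  rw [chainCount, chainCount, Function.iterate_add_apply]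
  exact (spreadAntitone_chainCount k).two_pow_mul_windowSum_le q c.cast_nonneg

end ChainCount

section Kfun

lemma Kfun_eq_sum (n : ℕ) : Kfun n = n.factorization.sum fun p r => r * (p - 1) := by
  unfold Kfun Finsupp.sum
  rw [← Finset.sum_tsub_distrib]
  · simp only [Nat.mul_sub, mul_one]
  · exact fun p hp => Nat.le_mul_of_pos_right _ (Nat.prime_of_mem_primeFactors hp).pos

lemma Kfun_mul {m n : ℕ} (hm : m ≠ 0) (hn : n ≠ 0) : Kfun (m * n) = Kfun m + Kfun n := by
  simp only [Kfun_eq_sum, Nat.factorization_mul hm hn]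
  exact Finsupp.sum_add_index' (fun _ => zero_mul _) fun _ _ _ => add_mul _ _ _

lemma Kfun_prime {q : ℕ} (hq : q.Prime) : Kfun q = q - 1 := by
  simp [Kfun_eq_sum, hq.factorization]

/-- The effect on a bound `b` for a chain partition (see `HasChainPartition`) of taking the product
with a product of chains whose lengths are the prime factors of `n`. -/
noncomputable def scaleBound (n : ℕ) (b : ℕ → ℝ) (k : ℕ) : ℝ :=
  n / 2 ^ Kfun n * b (k + Kfun n)

lemma scaleBound_one (b : ℕ → ℝ) : scaleBound 1 b = b := by
  ext k
  simp [scaleBound, Kfun]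

lemma scaleBound_scaleBound {m n : ℕ} (hm : m ≠ 0) (hn : n ≠ 0) (b : ℕ → ℝ) :
    scaleBound n (scaleBound m b) = scaleBound (m * n) b := by
  ext k
  simp only [scaleBound, Kfun_mul hm hn, pow_add, Nat.cast_mul, add_assoc, add_comm (Kfun n)]
  field_simp

lemma sum_scaleBound_le {I : Type*} [Fintype I] (n : ℕ) {b : I → ℕ → ℝ} {b' : ℕ → ℝ}
    (h : ∀ k, ∑ i, b i k ≤ b' k) (k : ℕ) : ∑ i, scaleBound n (b i) k ≤ scaleBound n b' k := by
  simp only [scaleBound, ← Finset.mul_sum]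
  exact mul_le_mul_of_nonneg_left (h _) (by positivity)

lemma scaleBound_chainCount_one (n : ℕ) : scaleBound n (fun k => chainCount k 1) 0 = wstar n := by
  simp [scaleBound, wstar, chainCount_one]

end Kfun

section ChainPartition

variable {X Y Z : Type*}

/-- The finite type `X` splits into `R`-chains whose lengths `c i` satisfy
`∑ i, chainCount k (c i) ≤ b k` for every `k`. The bound at `k = 0` controls the number of nonempty
chains; the others are needed to form products. -/
def HasChainPartition (R : X → X → Prop) (b : ℕ → ℝ) : Prop :=
  ∃ (I : Type) (_ : Fintype I) (c : I → ℕ) (e : (Σ i, Fin (c i)) ≃ X),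
    (∀ i (j j' : Fin (c i)), j ≤ j' → R (e ⟨i, j⟩) (e ⟨i, j'⟩)) ∧
      ∀ k, ∑ i, (chainCount k (c i) : ℝ) ≤ b k

namespace HasChainPartition

variable {R : X → X → Prop} {R' : Y → Y → Prop} {R'' : Z → Z → Prop} {b b' : ℕ → ℝ}

lemma map (h : HasChainPartition R b) (φ : X ≃ Y) (hφ : ∀ x x', R x x' → R' (φ x) (φ x'))
    (hb : ∀ k, b k ≤ b' k) : HasChainPartition R' b' := by
  obtain ⟨I, hI, c, e, he, hs⟩ := h
  exact ⟨I, hI, c, e.trans φ, fun i j j' hj => hφ _ _ (he i j j' hj), fun k => (hs k).trans (hb k)⟩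

lemma of_isEmpty [IsEmpty X] (hb : ∀ k, 0 ≤ b k) : HasChainPartition R b :=
  ⟨Empty, inferInstance, fun _ => 0, Equiv.equivOfIsEmpty _ _, fun i => i.elim,
    fun k => by simpa using hb k⟩

lemma fin (c : ℕ) : HasChainPartition (fun i j : Fin c => i ≤ j) fun k => chainCount k c :=
  ⟨Unit, inferInstance, fun _ => c, Equiv.uniqueSigma _, fun _ _ _ h => h, fun k => by simp⟩

lemma sigma {I : Type} [Fintype I] {X : I → Type*} {R : ∀ i, X i → X i → Prop} {b : I → ℕ → ℝ}
    (h : ∀ i, HasChainPartition (R i) (b i)) (φ : (Σ i, X i) ≃ Y)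
    (hφ : ∀ i x x', R i x x' → R' (φ ⟨i, x⟩) (φ ⟨i, x'⟩)) (hb : ∀ k, ∑ i, b i k ≤ b' k) :
    HasChainPartition R' b' := by
  choose J hJ c e he hs using h
  refine ⟨Σ i, J i, inferInstance, fun x => c x.1 x.2,
    ((Equiv.sigmaAssoc fun i j => Fin (c i j)).trans (Equiv.sigmaCongrRight e)).trans φ,
    fun ⟨i, j⟩ k k' hk => hφ _ _ _ (he i j k k' hk), fun k => ?_⟩
  rw [Fintype.sum_sigma]
  exact (Finset.sum_le_sum fun i _ => hs i k).trans (hb k)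

lemma sum (h : HasChainPartition R b) (h' : HasChainPartition R' b') (φ : X ⊕ Y ≃ Z)
    (hl : ∀ x x', R x x' → R'' (φ (.inl x)) (φ (.inl x')))
    (hr : ∀ y y', R' y y' → R'' (φ (.inr y)) (φ (.inr y'))) :
    HasChainPartition R'' fun k => b k + b' k := by
  obtain ⟨I, hI, c, e, he, hs⟩ := h
  obtain ⟨J, hJ, d, e', he', hs'⟩ := h'
  refine ⟨I ⊕ J, inferInstance, Sum.elim c d,
    ((Equiv.sumSigmaDistrib _).trans (Equiv.sumCongr e e')).trans φ, ?_, fun k => ?_⟩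
  · rintro (i | i) j j' hj
    · exact hl _ _ (he i j j' hj)
    · exact hr _ _ (he' i j j' hj)
  · rw [Fintype.sum_sum_type]
    exact add_le_add (hs k) (hs' k)

end HasChainPartition

/-- The decomposition of the `(c + 1) × (q + 1)` grid into a symmetric chain of length `c + q + 1`,
made of the first row up to its last entry and the last column, and a `c × q` grid. -/
def hookMap (c q : ℕ) : Fin (c + q + 1) ⊕ Fin c × Fin q → Fin (c + 1) × Fin (q + 1) :=
  Sum.elim (fun i => (⟨i - q, by lia⟩, ⟨min i q, by lia⟩)) (Prod.map Fin.succ Fin.castSucc)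

lemma hookMap_bijective (c q : ℕ) : Function.Bijective (hookMap c q) := by
  refine (Fintype.bijective_iff_injective_and_card _).2 ⟨?_, ?_⟩
  · rintro (i | ⟨i, j⟩) (i' | ⟨i', j'⟩) h <;>
      simp only [hookMap, Sum.elim_inl, Sum.elim_inr, Prod.map_apply, Prod.ext_iff, Fin.ext_iff,
        Fin.val_succ, Fin.val_castSucc] at h
    · exact congrArg _ (Fin.ext (by lia))
    · lia
    · lia
    · exact congrArg _ (Prod.ext (Fin.ext (by lia)) (Fin.ext h.2))
  · simp only [Fintype.card_sum, Fintype.card_prod, Fintype.card_fin]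
    ring

lemma hasChainPartition_grid (c q : ℕ) :
    HasChainPartition (fun x y : Fin c × Fin q => x ≤ y) fun k => windowSum q (chainCount k) c := by
  induction q generalizing c with
  | zero => exact .of_isEmpty fun k => by simp [windowSum]
  | succ q ih =>
    rcases c with _ | c
    · exact .of_isEmpty fun k => by simp [windowSum_zero_right (chainCount_odd k)]
    refine ((HasChainPartition.fin (c + q + 1)).sum (ih c)
      (Equiv.ofBijective _ (hookMap_bijective c q)) (fun i j hij => ?_)
      fun x y hxy => ?_).map (.refl _) (fun _ _ h => h) fun k => ?_
    · have hij' : (i : ℕ) ≤ j := hij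
      exact ⟨Nat.sub_le_sub_right hij' q, min_le_min_right q hij'⟩
    · exact ⟨Fin.succ_le_succ_iff.2 hxy.1, Fin.castSucc_le_castSucc_iff.2 hxy.2⟩
    · refine le_of_eq ?_
      rw [windowSum_succ']
      push_cast
      ring_nf

end ChainPartition

section ChainProducts

variable {X Q Q' : Type*} {R : X → X → Prop} {S : Q → Q → Prop} {S' : Q' → Q' → Prop} {m n : ℕ}

/-- The product of `S` with every finite chain has a chain partition as good as if `S` were a
product of chains whose lengths are the prime factors of `n`. -/
def HasChainProducts (S : Q → Q → Prop) (n : ℕ) : Prop :=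
  ∀ c : ℕ, HasChainPartition (fun x y : Fin c × Q => x.1 ≤ y.1 ∧ S x.2 y.2)
    (scaleBound n fun k => chainCount k c)

lemma HasChainPartition.prod {b : ℕ → ℝ} (hR : HasChainPartition R b) (hS : HasChainProducts S n) :
    HasChainPartition (fun x y : X × Q => R x.1 y.1 ∧ S x.2 y.2) (scaleBound n b) := by
  obtain ⟨I, _, c, e, he, hs⟩ := hR
  exact .sigma (fun i => hS (c i))
    ((Equiv.sigmaProdDistrib _ _).symm.trans (Equiv.prodCongr e (Equiv.refl _)))
    (fun i x x' hx => ⟨he _ _ _ hx.1, hx.2⟩) (sum_scaleBound_le n hs)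

namespace HasChainProducts

lemma map (h : HasChainProducts S n) (φ : Q ≃ Q') (hφ : ∀ x x', S x x' → S' (φ x) (φ x')) :
    HasChainProducts S' n := fun c =>
  (h c).map ((Equiv.refl _).prodCongr φ) (fun _ _ hx => ⟨hx.1, hφ _ _ hx.2⟩) fun _ => le_rfl

lemma prod {R : Q' → Q' → Prop} (hR : HasChainProducts R m) (hS : HasChainProducts S n)
    (hm : m ≠ 0) (hn : n ≠ 0) :
    HasChainProducts (fun x y : Q' × Q => R x.1 y.1 ∧ S x.2 y.2) (m * n) := fun c =>
  ((hR c).prod hS).map (Equiv.prodAssoc _ _ _) (fun _ _ h => ⟨h.1.1, h.1.2, h.2⟩) fun k => by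
    rw [scaleBound_scaleBound hm hn]

lemma of_unique [Unique Q] (hS : S default default) : HasChainProducts S 1 := fun c => by
  rw [scaleBound_one]
  refine (HasChainPartition.fin c).map (Equiv.prodUnique _ _).symm (fun i j hij => ⟨hij, ?_⟩)
    fun _ => le_rfl
  simpa only [Subsingleton.elim _ (default : Q)] using hS

lemma hasChainPartition (h : HasChainProducts S n) :
    HasChainPartition S (scaleBound n fun k => chainCount k 1) :=
  (h 1).map (Equiv.uniqueProd _ _) (fun _ _ hx => hx.2) fun k => by simp

lemma fin {q : ℕ} (hq : q.Prime) : HasChainProducts (fun i j : Fin q => i ≤ j) q := fun c => by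
  refine (hasChainPartition_grid c q).map (.refl _) (fun _ _ h => h) fun k => ?_
  obtain ⟨r, rfl⟩ := Nat.exists_eq_add_of_le' hq.one_le
  have hle : (2 ^ r * windowSum (r + 1) (chainCount k) c : ℝ) ≤
      (r + 1) * chainCount (r + k) c := by
    exact_mod_cast two_pow_mul_windowSum_chainCount_le k r c
  rw [scaleBound, Kfun_prime hq, Nat.add_sub_cancel, div_mul_eq_mul_div,
    le_div_iff₀ (by positivity), mul_comm, add_comm k]
  exact_mod_cast hle

end HasChainProducts

end ChainProducts

section Movers

variable {G Ω : Type*} [Group G] [MulAction G Ω]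

/-- The group element `g` moves `α` to `β` and everything below `α` to something below `β`. -/
def IsMover [LT Ω] (g : G) (α β : Ω) : Prop :=
  g • α = β ∧ ∀ γ < α, g • γ < β

variable (G) in
/-- Some element of `G` is a mover from `α` to `β`. -/
def Movable [LT Ω] (α β : Ω) : Prop :=
  ∃ g : G, IsMover g α β

lemma isMover_one [LT Ω] (α : Ω) : IsMover (1 : G) α α :=
  ⟨one_smul _ _, fun γ hγ => by rwa [one_smul]⟩

lemma IsMover.mul [LT Ω] {g h : G} {α β γ : Ω} (hh : IsMover h β γ) (hg : IsMover g α β) :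
    IsMover (h * g) α γ :=
  ⟨by rw [mul_smul, hg.1, hh.1], fun δ hδ => by rw [mul_smul]; exact hh.2 _ (hg.2 _ hδ)⟩

lemma exists_section_of_chain [LT Ω] [MulAction.IsPretransitive G Ω] (ω₀ : Ω) {c : ℕ}
    (x : Fin c → Ω) (hx : ∀ j j', j ≤ j' → Movable G (x j) (x j')) :
    ∃ t : Fin c → G, (∀ j, t j • ω₀ = x j) ∧
      ∀ j j', j ≤ j' → IsMover (t j' * (t j)⁻¹) (x j) (x j') := by
  rcases c with _ | c
  · exact ⟨Fin.elim0, fun j => j.elim0, fun j => j.elim0⟩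
  choose g hg using fun j : Fin c => hx j.castSucc j.succ Fin.castSucc_lt_succ.le
  obtain ⟨g₀, hg₀⟩ := MulAction.exists_smul_eq G ω₀ (x 0)
  let t : Fin (c + 1) → G := Fin.induction g₀ fun j u => g j * u
  have ht_succ : ∀ j, t j.succ = g j * t j.castSucc := fun j => Fin.induction_succ _ _ j
  refine ⟨t, fun j => ?_, fun j j' => ?_⟩
  · induction j using Fin.induction with
    | zero => exact hg₀
    | succ j ih => rw [ht_succ, mul_smul, ih, (hg j).1]
  · induction j' using Fin.induction with
    | zero =>
      intro hj
      rw [Fin.le_zero_iff.1 hj, mul_inv_cancel]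
      exact isMover_one _
    | succ j' ih =>
      intro hj
      rcases hj.eq_or_lt with rfl | hj
      · rw [mul_inv_cancel]
        exact isMover_one _
      · rw [ht_succ, mul_assoc]
        exact (hg j').mul (ih (Fin.le_castSucc_iff.2 hj))

lemma HasChainPartition.exists_section [LT Ω] [MulAction.IsPretransitive G Ω] {b : ℕ → ℝ}
    (h : HasChainPartition (Movable G (Ω := Ω)) b) (ω₀ : Ω) :
    ∃ t : Ω → G, (∀ ω, t ω • ω₀ = ω) ∧
      HasChainPartition (fun α β => IsMover (t β * (t α)⁻¹) α β) b := by
  obtain ⟨I, hI, c, e, he, hs⟩ := h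
  choose t ht htmove using fun i => exists_section_of_chain ω₀ (fun j => e ⟨i, j⟩) (he i)
  let s : (Σ i, Fin (c i)) → G := fun x => t x.1 x.2
  refine ⟨s ∘ e.symm, fun ω => ?_, I, hI, c, e, fun i j j' hj => ?_, hs⟩
  · exact (ht _ _).trans (e.apply_symm_apply ω)
  · simp only [Function.comp_apply, e.symm_apply_apply]
    exact htmove i j j' hj

end Movers

section Fibration

variable {G Ω Y Q : Type*} [Group G] [MulAction G Ω] [MulAction G Y] {M : Subgroup G}
  [MulAction M Q]

lemma bijective_smul_fiber {r : Ω → Y} (hr : ∀ (g : G) ω, r (g • ω) = g • r ω) {y₀ : Y}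
    {t : Y → G} (ht : ∀ y, t y • y₀ = y) {ι : Q → Ω} (hι : ι.Injective)
    (hrange : ∀ ω, ω ∈ Set.range ι ↔ r ω = y₀) :
    Function.Bijective fun x : Y × Q => t x.1 • ι x.2 := by
  have hrι : ∀ q, r (ι q) = y₀ := fun q => (hrange _).1 ⟨q, rfl⟩
  refine ⟨?_, fun ω => ?_⟩
  · rintro ⟨y, q⟩ ⟨y', q'⟩ (h : t y • ι q = t y' • ι q')
    obtain rfl : y = y' := by simpa only [hr, hrι, ht] using congrArg r h
    rw [hι (smul_left_cancel _ h)]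
  · obtain ⟨q, hq⟩ := (hrange ((t (r ω))⁻¹ • ω)).2 (by rw [hr, inv_smul_eq_iff, ht])
    exact ⟨(r ω, q), by simp only [hq, smul_inv_smul]⟩

/-- The movers of the base and of the fibre combine because `M`, acting trivially on the base, can
be used to move points within a fibre after the section has moved that fibre into place. -/
theorem exists_linearOrder_of_fibration [LinearOrder Y] [LinearOrder Q] {r : Ω → Y}
    (hr : ∀ (g : G) ω, r (g • ω) = g • r ω) (hM : ∀ (m : M) (y : Y), m • y = y) {y₀ : Y}
    {t : Y → G} (ht : ∀ y, t y • y₀ = y) {ι : Q → Ω} (hι : ι.Injective)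
    (hrange : ∀ ω, ω ∈ Set.range ι ↔ r ω = y₀) (hιsmul : ∀ (m : M) q, ι (m • q) = m • ι q) :
    ∃ (_ : LinearOrder Ω) (Φ : Y × Q ≃ Ω), ∀ x x' : Y × Q,
      IsMover (t x'.1 * (t x.1)⁻¹) x.1 x'.1 ∧ Movable M x.2 x'.2 → Movable G (Φ x) (Φ x') := by
  let Φ := Equiv.ofBijective _ (bijective_smul_fiber hr ht hι hrange)
  have hrΦ : ∀ z s, r (Φ (z, s)) = z := fun z s => by
    change r (t z • ι s) = z
    rw [hr, (hrange _).1 ⟨s, rfl⟩, ht]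
  let : LinearOrder Ω := LinearOrder.lift' (fun ω => toLex (Φ.symm ω))
    (toLex.injective.comp Φ.symm.injective)
  have hlt : ∀ y q y' q', Φ (y, q) < Φ (y', q') ↔ y < y' ∨ y = y' ∧ q < q' := fun y q y' q' => by
    change toLex (Φ.symm _) < toLex (Φ.symm _) ↔ _
    simp only [Φ.symm_apply_apply, Prod.Lex.toLex_lt_toLex]
  refine ⟨this, Φ, ?_⟩
  rintro ⟨y, q⟩ ⟨y', q'⟩ ⟨hbase, m, hm⟩
  have hmove : ∀ z, (t y' * m * (t y)⁻¹) • Φ (y, z) = Φ (y', m • z) := fun z => by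
    change _ • t y • ι z = t y' • ι (m • z)
    rw [hιsmul, ← mul_smul, inv_mul_cancel_right, mul_smul]
    rfl
  have hbase_smul : ∀ z : Y, (t y' * m * (t y)⁻¹) • z = (t y' * (t y)⁻¹) • z := fun z => by
    rw [mul_smul, mul_smul, mul_smul]
    exact congrArg _ (hM m _)
  refine ⟨t y' * m * (t y)⁻¹, by rw [hmove, hm.1], fun γ hγ => ?_⟩
  obtain ⟨⟨z, s⟩, rfl⟩ := Φ.surjective γ
  rcases (hlt z s y q).1 hγ with hz | ⟨rfl, hs⟩
  · obtain ⟨⟨z', s'⟩, hz's'⟩ := Φ.surjective ((t y' * m * (t y)⁻¹) • Φ (z, s))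
    have hz' : z' = (t y' * (t y)⁻¹) • z := by
      rw [← hbase_smul, ← hrΦ z s, ← hr, ← hz's', hrΦ]
    rw [← hz's', hlt, hz']
    exact .inl (hbase.2 z hz)
  · rw [hmove, hlt]
    exact .inr ⟨rfl, hm.2 s hs⟩

end Fibration

section Abelian

lemma exists_linearOrder_zpowers {G : Type*} [Group G] {x : G} (hx : (orderOf x).Prime) :
    ∃ _ : LinearOrder (Subgroup.zpowers x),
      HasChainProducts (Movable (Subgroup.zpowers x) (Ω := Subgroup.zpowers x)) (orderOf x) := by
  let e := finEquivZPowers (orderOf_pos_iff.1 hx.pos)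
  let : LinearOrder (Subgroup.zpowers x) := LinearOrder.lift' e.symm e.symm.injective
  have hlt : ∀ i j, e i < e j ↔ i < j := fun i j => by
    change e.symm _ < e.symm _ ↔ _
    simp only [e.symm_apply_apply]
  refine ⟨this, (HasChainProducts.fin hx).map e fun i j hij => ?_⟩
  obtain ⟨d, hd⟩ := Nat.exists_eq_add_of_le (Fin.le_def.1 hij)
  let g : Subgroup.zpowers x := ⟨x ^ d, d, zpow_natCast x d⟩
  have hg : ∀ k l : Fin (orderOf x), (l : ℕ) = k + d → g • e k = e l := fun k l hl => by
    ext
    change x ^ d * x ^ (k : ℕ) = x ^ (l : ℕ)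
    rw [hl, ← pow_add, add_comm]
  refine ⟨g, hg i j hd, fun γ hγ => ?_⟩
  obtain ⟨k, rfl⟩ := e.surjective γ
  have hk : (k : ℕ) < i := (hlt k i).1 hγ
  rw [hg k ⟨k + d, by lia⟩ rfl, hlt]
  exact Fin.lt_def.2 (show (k : ℕ) + d < j by lia)

theorem exists_linearOrder_of_isMulCommutative (Q : Type*) [Group Q] [IsMulCommutative Q]
    [Finite Q] : ∃ _ : LinearOrder Q, HasChainProducts (Movable Q (Ω := Q)) (Nat.card Q) := by
  induction hn : Nat.card Q using Nat.strong_induction_on generalizing Q with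
  | h n ih =>
  subst hn
  rcases subsingleton_or_nontrivial Q with hQ | hQ
  · let : Unique Q := uniqueOfSubsingleton 1
    rw [Nat.card_unique]
    let : LinearOrder Q :=
      LinearOrder.lift' (fun _ => ()) (Function.injective_of_subsingleton _)
    exact ⟨this, .of_unique ⟨1, isMover_one _⟩⟩
  obtain ⟨q, hq, hqQ⟩ := Nat.exists_prime_and_dvd (Finite.one_lt_card (α := Q)).ne'
  have := Fact.mk hq
  obtain ⟨x, rfl⟩ := exists_prime_orderOf_dvd_card' (G := Q) q hqQ
  let M := Subgroup.zpowers x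
  have : IsMulCommutative (Q ⧸ M) :=
    Subgroup.Normal.quotient_commutative_iff_commutator_le.2 ((commutator_eq_bot Q).trans_le bot_le)
  have hcard : Nat.card Q = Nat.card (Q ⧸ M) * orderOf x := by
    rw [M.card_eq_card_quotient_mul_card_subgroup, Nat.card_zpowers]
  obtain ⟨_, hY⟩ := ih _ (hcard ▸ lt_mul_of_one_lt_right Nat.card_pos hq.one_lt) (Q ⧸ M) rfl
  obtain ⟨_, hM⟩ := exists_linearOrder_zpowers hq
  have hmk : ∀ y : Q ⧸ M, ((y.out : Q) : Q ⧸ M) = y := Quotient.out_eq'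
  have hsmul : ∀ (g : Q) (y : Q ⧸ M), g • y = (g : Q ⧸ M) * y := fun g y => by
    rw [← hmk y]; rfl
  obtain ⟨ord, Φ, hΦ⟩ := exists_linearOrder_of_fibration (M := M) (r := ((↑) : Q → Q ⧸ M))
    (fun _ _ => rfl)
    (fun m y => (hsmul m y).trans (by rw [(QuotientGroup.eq_one_iff _).2 m.2, one_mul]))
    (y₀ := 1) (t := Quotient.out) (fun y => by rw [hsmul, hmk, mul_one])
    Subtype.val_injective
    (fun ω => by rw [Subtype.range_coe]; exact (QuotientGroup.eq_one_iff ω).symm) fun _ _ => rfl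
  rw [hcard]
  refine ⟨ord, (hY.prod hM Nat.card_pos.ne' hq.ne_zero).map Φ ?_⟩
  rintro ⟨y, s⟩ ⟨y', s'⟩ ⟨⟨g, rfl, hg⟩, hs⟩
  refine hΦ _ _ ⟨?_, hs⟩
  have hmul : ∀ z : Q ⧸ M, ((g • y).out * y.out⁻¹) • z = g • z := fun z => by
    rw [hsmul, QuotientGroup.mk_mul, QuotientGroup.mk_inv, hmk, hmk, smul_eq_mul,
      mul_inv_cancel_right, smul_eq_mul]
  exact ⟨hmul y, fun z hz => (hmul z).symm ▸ hg z hz⟩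

end Abelian

section Soluble

variable {G : Type*} [Group G] {H M : Subgroup G}

lemma exists_linearOrder_quotient_of_normal [M.Normal] [LinearOrder (G ⧸ M ⊔ H)]
    [LinearOrder (M ⧸ H.subgroupOf M)] {t : G ⧸ M ⊔ H → G}
    (ht : ∀ y, t y • ((1 : G) : G ⧸ M ⊔ H) = y) :
    ∃ (_ : LinearOrder (G ⧸ H)) (Φ : (G ⧸ M ⊔ H) × (M ⧸ H.subgroupOf M) ≃ G ⧸ H), ∀ x x',
      IsMover (t x'.1 * (t x.1)⁻¹) x.1 x'.1 ∧ Movable M x.2 x'.2 → Movable G (Φ x) (Φ x') := by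
  let ι : M ⧸ H.subgroupOf M → G ⧸ H := Quotient.map' (fun m : M => (m : G)) fun a b hab => by
    rw [QuotientGroup.leftRel_apply] at hab ⊢
    exact hab
  refine exists_linearOrder_of_fibration (r := Subgroup.quotientMapOfLE le_sup_right) (ι := ι)
    ?_ ?_ ht ?_ ?_ ?_
  · rintro g ⟨ω⟩
    rfl
  · rintro m ⟨y⟩
    have hmem : (m * y : G)⁻¹ * y ∈ M := by
      simpa [mul_assoc] using ‹M.Normal›.conj_mem _ (inv_mem m.2) y⁻¹
    exact QuotientGroup.eq.2 (Subgroup.mem_sup_left hmem)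
  · rintro ⟨a⟩ ⟨b⟩ hab
    exact QuotientGroup.eq.2 (Subgroup.mem_subgroupOf.2 (QuotientGroup.eq.1 hab))
  · rintro ⟨g⟩
    refine ⟨?_, fun hg => ?_⟩
    · rintro ⟨⟨m⟩, hm⟩
      rw [← hm]
      exact QuotientGroup.eq.2 (by simpa using Subgroup.mem_sup_left m.2)
    · have hg' : g ∈ ((M ⊔ H : Subgroup G) : Set G) := by
        simpa using inv_mem (QuotientGroup.eq.1 hg)
      rw [Subgroup.normal_mul] at hg'
      obtain ⟨m, hm, h, hh, rfl⟩ := Set.mem_mul.1 hg'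
      exact ⟨((⟨m, hm⟩ : M) : M ⧸ H.subgroupOf M), QuotientGroup.eq.2 (by simpa using hh)⟩
  · rintro m ⟨q⟩
    rfl

lemma exists_linearOrder_quotient_of_commutator_le (hM : commutator G ≤ M) [M.FiniteIndex] :
    ∃ _ : LinearOrder (G ⧸ M), HasChainProducts (Movable G (Ω := G ⧸ M)) M.index := by
  have := Subgroup.Normal.of_commutator_le G hM
  have := Subgroup.Normal.quotient_commutative_iff_commutator_le.2 hM
  obtain ⟨ord, h⟩ := exists_linearOrder_of_isMulCommutative (G ⧸ M)
  refine ⟨ord, h.map (.refl _) ?_⟩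
  rintro α β ⟨⟨g⟩, hg, hlt⟩
  have hsmul : ∀ γ : G ⧸ M, g • γ = (g : G ⧸ M) * γ := by
    rintro ⟨γ⟩
    rfl
  exact ⟨g, (hsmul α).trans hg, fun γ hγ => (hsmul γ).trans_lt (hlt γ hγ)⟩

lemma exists_normal_not_le_commutator_le [Group.IsSolvable G] (hH : H ≠ ⊤) :
    ∃ M : Subgroup G, M.Normal ∧ ¬ M ≤ H ∧ ⁅M, M⁆ ≤ H := by
  classical
  have hex : ∃ i, derivedSeries G i ≤ H := by
    obtain ⟨n, hn⟩ := (Group.isSolvable_def G).1 ‹_›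
    exact ⟨n, hn ▸ bot_le⟩
  have hspec := Nat.find_spec hex
  rcases hi : Nat.find hex with _ | i
  · rw [hi, derivedSeries_zero, top_le_iff] at hspec
    contradiction
  · rw [hi, derivedSeries_succ] at hspec
    exact ⟨derivedSeries G i, inferInstance, Nat.find_min hex (by lia), hspec⟩

theorem exists_linearOrder_quotient_of_isSolvable [Group.IsSolvable G] [H.FiniteIndex] :
    ∃ _ : LinearOrder (G ⧸ H), HasChainPartition (Movable G (Ω := G ⧸ H))
      (scaleBound H.index fun k => chainCount k 1) := by
  induction hn : H.index using Nat.strong_induction_on generalizing H with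
  | h n ih =>
  subst hn
  rcases eq_or_ne H ⊤ with rfl | hH
  · have := QuotientGroup.subsingleton_quotient_top (G := G)
    let : Unique (G ⧸ (⊤ : Subgroup G)) :=
      (uniqueOfSubsingleton 1 : Unique (G ⧸ (⊤ : Subgroup G)))
    let : LinearOrder (G ⧸ (⊤ : Subgroup G)) :=
      LinearOrder.lift' (fun _ => ()) (Function.injective_of_subsingleton _)
    rw [Subgroup.index_top]
    exact ⟨this, (HasChainProducts.of_unique ⟨1, isMover_one _⟩).hasChainPartition⟩
  obtain ⟨M, hMn, hMH, hMc⟩ := exists_normal_not_le_commutator_le hH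
  have : (M ⊔ H).FiniteIndex := Subgroup.finiteIndex_of_le le_sup_right
  have hK : (M ⊔ H).index < H.index := Subgroup.index_strictAnti (right_lt_sup.2 hMH)
  obtain ⟨_, hbase⟩ := ih _ hK rfl
  obtain ⟨t, ht, hbase⟩ := hbase.exists_section ((1 : G) : G ⧸ M ⊔ H)
  obtain ⟨_, hfib⟩ := exists_linearOrder_quotient_of_commutator_le (G := M) (M := H.subgroupOf M)
    (Subgroup.map_le_iff_le_comap.1 (M.map_subtype_commutator.trans_le hMc))
  obtain ⟨ord, Φ, hΦ⟩ := exists_linearOrder_quotient_of_normal ht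
  have hindex : H.index = (M ⊔ H).index * (H.subgroupOf M).index :=
    (Nat.card_congr Φ).symm.trans (Nat.card_prod _ _)
  refine ⟨ord, (hbase.prod hfib).map Φ (fun x x' hx => hΦ x x' hx) fun k => ?_⟩
  rw [hindex, scaleBound_scaleBound Subgroup.FiniteIndex.index_ne_zero
    Subgroup.FiniteIndex.index_ne_zero]

theorem exists_linearOrder_hasChainPartition (G Ω : Type*) [Group G] [Group.IsSolvable G]
    [MulAction G Ω] [MulAction.IsPretransitive G Ω] [Finite Ω] [Nonempty Ω] :
    ∃ _ : LinearOrder Ω, HasChainPartition (Movable G (Ω := Ω))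
      (scaleBound (Nat.card Ω) fun k => chainCount k 1) := by
  obtain ⟨ω⟩ := ‹Nonempty Ω›
  let φ := Equiv.ofBijective (MulAction.ofQuotientStabilizer G ω)
    ⟨MulAction.injective_ofQuotientStabilizer G ω, fun α =>
      (MulAction.exists_smul_eq G ω α).imp' QuotientGroup.mk fun _ hg => hg⟩
  have hφ : ∀ (g : G) x, φ (g • x) = g • φ x := MulAction.ofQuotientStabilizer_smul G ω
  have : Finite (G ⧸ MulAction.stabilizer G ω) := .of_equiv _ φ.symm
  have : (MulAction.stabilizer G ω).FiniteIndex := Subgroup.finiteIndex_of_finite_quotient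
  obtain ⟨_, h⟩ := exists_linearOrder_quotient_of_isSolvable (H := MulAction.stabilizer G ω)
  let : LinearOrder Ω := LinearOrder.lift' φ.symm φ.symm.injective
  have hlt : ∀ α β, φ α < φ β ↔ α < β := fun α β => by
    change φ.symm _ < φ.symm _ ↔ _
    simp only [φ.symm_apply_apply]
  refine ⟨this, h.map φ ?_ fun k => by rw [← Nat.card_congr φ, Subgroup.index]⟩
  rintro α β ⟨g, rfl, hg⟩
  refine ⟨g, (hφ g α).symm, fun γ hγ => ?_⟩
  obtain ⟨γ, rfl⟩ := φ.surjective γ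
  rw [← hφ, hlt]
  exact hg γ ((hlt γ α).1 hγ)

end Soluble

section OrbitSpan

variable (N F : Type*) {W : Type*} [Group N] [Field F] [AddCommGroup W] [Module F W]
  [DistribMulAction N W]

/-- The `N`-submodule generated by `T`. -/
def orbitSpan (T : Set W) : Submodule F W :=
  Submodule.span F {w : W | ∃ g : N, ∃ t ∈ T, w = g • t}

variable {N F} {S : Submodule F W} {T T' : Set W}

lemma subset_orbitSpan : T ⊆ orbitSpan N F T := fun t ht =>
  Submodule.subset_span ⟨1, t, ht, (one_smul N t).symm⟩

lemma orbitSpan_mono (h : T ⊆ T') : orbitSpan N F T ≤ orbitSpan N F T' :=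
  Submodule.span_mono fun _ ⟨g, t, ht, hw⟩ => ⟨g, t, h ht, hw⟩

lemma orbitSpan_le (hS : ∀ g : N, ∀ w ∈ S, g • w ∈ S) (h : T ⊆ S) : orbitSpan N F T ≤ S :=
  Submodule.span_le.2 fun _ ⟨g, _, ht, hw⟩ => hw ▸ hS g _ (h ht)

lemma smul_mem_orbitSpan [SMulCommClass N F W] (g : N) :
    ∀ w ∈ orbitSpan N F T, g • w ∈ orbitSpan N F T := by
  have hle : orbitSpan N F T ≤ (orbitSpan N F T).comap (DistribSMul.toLinearMap F W g) := by
    refine Submodule.span_le.2 ?_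
    rintro _ ⟨g', t, ht, rfl⟩
    exact Submodule.subset_span ⟨g * g', t, ht, (mul_smul _ _ _).symm⟩
  exact fun w hw => hle hw

end OrbitSpan

section FiniteDimensional

variable {F W : Type*} [Field F] [AddCommGroup W] [Module F W]

lemma exists_finset_card_eq_finrank_span_eq (B : Submodule F W) [FiniteDimensional F B] :
    ∃ X : Finset W, X.card = Module.finrank F B ∧ Submodule.span F (X : Set W) = B := by
  rw [Module.finrank_eq_spanFinrank_of_free, B.spanFinrank_top]
  exact (Submodule.FG.of_finite (N := B)).exists_span_finset_card_eq_spanFinrank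

lemma exists_finset_card_add_finrank_eq_sup_span_eq {A B : Submodule F W} [FiniteDimensional F B]
    (h : A ≤ B) : ∃ X : Finset W, X.card + Module.finrank F A = Module.finrank F B ∧
      A ⊔ Submodule.span F (X : Set W) = B := by
  obtain ⟨C, hdisj, rfl⟩ := IsModularLattice.exists_disjoint_and_sup_eq h
  have : FiniteDimensional F A := Submodule.finiteDimensional_of_le h
  have : FiniteDimensional F C := Submodule.finiteDimensional_of_le (le_sup_right (a := A))
  obtain ⟨X, hcard, rfl⟩ := exists_finset_card_eq_finrank_span_eq C
  refine ⟨X, ?_, rfl⟩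
  rw [hcard, add_comm, ← Submodule.finrank_sup_add_finrank_inf_eq, hdisj.eq_bot, finrank_bot,
    add_zero]

end FiniteDimensional

section LeadSpace

variable {N F W Ω : Type*} [Group N] [Field F] [AddCommGroup W] [Module F W] [DistribMulAction N W]
  {φ : Ω → Submodule F W} {S O : Submodule F W}

/-- The leading terms at `ω`, in `φ ω`, of the elements of `T` whose components above `ω` vanish. -/
def leadSpace [LT Ω] (φ : Ω → Submodule F W) (T : Submodule F W) (ω : Ω) : Submodule F W :=
  φ ω ⊓ (T ⊔ ⨆ ω' < ω, φ ω')

lemma leadSpace_le [LT Ω] (T : Submodule F W) (ω : Ω) : leadSpace φ T ω ≤ φ ω :=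
  inf_le_left

lemma leadSpace_mono [LT Ω] {T T' : Submodule F W} (h : T ≤ T') (ω : Ω) :
    leadSpace φ T ω ≤ leadSpace φ T' ω :=
  inf_le_inf_left _ (sup_le_sup_right h _)

instance [LT Ω] [∀ ω, FiniteDimensional F (φ ω)] (T : Submodule F W) (ω : Ω) :
    FiniteDimensional F (leadSpace φ T ω) :=
  Submodule.finiteDimensional_of_le (leadSpace_le T ω)

lemma IsMover.leadSpace_le_comap [SMulCommClass N F W] [MulAction N Ω] [LT Ω]
    (hφ : ∀ (g : N) ω, ∀ w ∈ φ ω, g • w ∈ φ (g • ω)) {g : N} {α β : Ω} (hg : IsMover g α β)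
    {T : Submodule F W} (hT : ∀ g : N, ∀ w ∈ T, g • w ∈ T) :
    leadSpace φ T α ≤ (leadSpace φ T β).comap (DistribSMul.toLinearMap F W g) := by
  have hlower : ⨆ ω < α, φ ω ≤ (⨆ ω < β, φ ω).comap (DistribSMul.toLinearMap F W g) :=
    iSup₂_le fun ω hω w hw =>
      Submodule.mem_iSup_of_mem _ (Submodule.mem_iSup_of_mem (hg.2 ω hω) (hφ g ω w hw))
  rintro w ⟨hw, hw'⟩
  obtain ⟨u, hu, v, hv, rfl⟩ := Submodule.mem_sup.1 hw'
  refine ⟨hg.1 ▸ hφ g α _ hw, ?_⟩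
  rw [map_add]
  exact Submodule.add_mem_sup (hT g u hu) (hlower hv)

lemma IsMover.finrank_leadSpace_le [SMulCommClass N F W] [MulAction N Ω] [LT Ω]
    (hφ : ∀ (g : N) ω, ∀ w ∈ φ ω, g • w ∈ φ (g • ω)) [∀ ω, FiniteDimensional F (φ ω)] {g : N}
    {α β : Ω} (hg : IsMover g α β) {T : Submodule F W} (hT : ∀ g : N, ∀ w ∈ T, g • w ∈ T) :
    Module.finrank F (leadSpace φ T α) ≤ Module.finrank F (leadSpace φ T β) := by
  rw [(Submodule.equivMapOfInjective (DistribSMul.toLinearMap F W g) (MulAction.injective g)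
    (leadSpace φ T α)).finrank_eq]
  exact Submodule.finrank_mono (Submodule.map_le_iff_le_comap.2 (hg.leadSpace_le_comap hφ hT))

lemma exists_finset_leadSpace_le [LT Ω] [∀ ω, FiniteDimensional F (φ ω)] (hO : O ≤ S) (ω : Ω) :
    ∃ X : Finset W, (X : Set W) ⊆ S ∧
      X.card + Module.finrank F (leadSpace φ O ω) ≤ Module.finrank F (leadSpace φ S ω) ∧
      ∀ O', O ≤ O' → (X : Set W) ⊆ O' → leadSpace φ S ω ≤ leadSpace φ O' ω := by
  classical
  obtain ⟨X, hcard, hsup⟩ :=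
    exists_finset_card_add_finrank_eq_sup_span_eq (leadSpace_mono (φ := φ) hO ω)
  have hX : (X : Set W) ⊆ leadSpace φ S ω :=
    Submodule.subset_span.trans (SetLike.coe_subset_coe.2 (le_sup_right.trans hsup.le))
  choose! f hfS r hr hfr using fun x hx => Submodule.mem_sup.1 (hX (a := x) hx).2
  refine ⟨X.image f, ?_, ?_, fun O' hOO' hfO' => ?_⟩
  · rw [Finset.coe_image, Set.image_subset_iff]
    exact hfS
  · exact (add_le_add_left Finset.card_image_le _).trans hcard.le
  · rw [← hsup, sup_le_iff, Submodule.span_le]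
    exact ⟨leadSpace_mono hOO' ω, fun x hx => ⟨(hX hx).1, Submodule.mem_sup.2
      ⟨f x, hfO' (Finset.mem_image_of_mem f hx), r x, hr x hx, hfr x hx⟩⟩⟩

/-- Movers carry what has been generated at one term of the chain on to the next, so each step
costs only the growth of the dimension. -/
lemma exists_finset_leadSpace_le_of_chain_succ [SMulCommClass N F W] [MulAction N Ω] [Preorder Ω]
    (hφ : ∀ (g : N) ω, ∀ w ∈ φ ω, g • w ∈ φ (g • ω)) [∀ ω, FiniteDimensional F (φ ω)]
    (hS : ∀ g : N, ∀ w ∈ S, g • w ∈ S) {c : ℕ} (x : Fin (c + 1) → Ω)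
    (hx : ∀ j j', j ≤ j' → Movable N (x j) (x j')) (m : Fin (c + 1)) :
    ∃ T : Finset W, (T : Set W) ⊆ S ∧ T.card ≤ Module.finrank F (leadSpace φ S (x m)) ∧
      ∀ j ≤ m, leadSpace φ S (x j) ≤ leadSpace φ (orbitSpan N F (T : Set W)) (x j) := by
  classical
  induction m using Fin.induction with
  | zero =>
    obtain ⟨X, hXS, hcard, hX⟩ := exists_finset_leadSpace_le (φ := φ) (bot_le : ⊥ ≤ S) (x 0)
    refine ⟨X, hXS, by lia, fun j hj => ?_⟩
    rw [Fin.le_zero_iff.1 hj]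
    exact hX _ bot_le subset_orbitSpan
  | succ m ih =>
    obtain ⟨T, hTS, hT, hle⟩ := ih
    obtain ⟨g, hg⟩ := hx _ _ m.castSucc_lt_succ.le
    have hgrow := hg.finrank_leadSpace_le hφ (T := orbitSpan N F (T : Set W)) smul_mem_orbitSpan
    have hge := Submodule.finrank_mono (hle _ le_rfl)
    obtain ⟨X, hXS, hcard, hX⟩ :=
      exists_finset_leadSpace_le (φ := φ) (orbitSpan_le hS hTS) (x m.succ)
    have hTX : orbitSpan N F (T : Set W) ≤ orbitSpan N F ((T ∪ X : Finset W) : Set W) :=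
      orbitSpan_mono (Finset.coe_subset.2 Finset.subset_union_left)
    have hXX : (X : Set W) ⊆ orbitSpan N F ((T ∪ X : Finset W) : Set W) :=
      (Finset.coe_subset.2 Finset.subset_union_right).trans subset_orbitSpan
    refine ⟨T ∪ X, ?_, (Finset.card_union_le _ _).trans (by lia), fun j hj => ?_⟩
    · rw [Finset.coe_union]
      exact Set.union_subset hTS hXS
    · rcases hj.lt_or_eq with hj | rfl
      · exact (hle j (Fin.le_castSucc_iff.2 hj)).trans (leadSpace_mono hTX _)
      · exact hX _ hTX hXX

lemma exists_finset_leadSpace_le_of_chain [SMulCommClass N F W] [MulAction N Ω] [Preorder Ω]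
    (hφ : ∀ (g : N) ω, ∀ w ∈ φ ω, g • w ∈ φ (g • ω)) [∀ ω, FiniteDimensional F (φ ω)] {a : ℕ}
    (ha : ∀ ω, Module.finrank F (φ ω) ≤ a) (hS : ∀ g : N, ∀ w ∈ S, g • w ∈ S) {c : ℕ}
    (x : Fin c → Ω) (hx : ∀ j j', j ≤ j' → Movable N (x j) (x j')) :
    ∃ T : Finset W, (T : Set W) ⊆ S ∧ (T.card : ℤ) ≤ a * chainCount 0 c ∧
      ∀ j, leadSpace φ S (x j) ≤ leadSpace φ (orbitSpan N F (T : Set W)) (x j) := by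
  rcases c with _ | c
  · exact ⟨∅, by simp, by simp [chainCount], fun j => j.elim0⟩
  obtain ⟨T, hTS, hT, hle⟩ :=
    exists_finset_leadSpace_le_of_chain_succ hφ hS x hx (Fin.last c)
  refine ⟨T, hTS, ?_, fun j => hle j (Fin.le_last j)⟩
  have hcount : chainCount 0 ((c + 1 : ℕ) : ℤ) = 1 :=
    Int.sign_eq_one_of_pos (Int.natCast_pos.2 c.succ_pos)
  rw [hcount, mul_one]
  exact_mod_cast hT.trans ((Submodule.finrank_mono (leadSpace_le _ _)).trans (ha _))

lemma le_of_leadSpace_le [LinearOrder Ω] [Finite Ω] (hφ : iSup φ = ⊤) (hO : O ≤ S)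
    (h : ∀ ω, leadSpace φ S ω ≤ leadSpace φ O ω) : S ≤ O := by
  have hlower : ∀ s : Finset Ω, IsLowerSet (s : Set Ω) → S ⊓ ⨆ ω ∈ s, φ ω ≤ O := by
    intro s
    induction s using Finset.induction_on_max with
    | empty => simp
    | insert α s hα ih =>
      intro hs
      have hmem : ∀ ω, ω ∈ s ↔ ω < α := fun ω => ⟨hα ω, fun hω =>
        (Finset.mem_insert.1 (hs hω.le (Finset.mem_insert_self α s))).resolve_left hω.ne⟩
      have hs' : IsLowerSet (s : Set Ω) := fun ω ω' hle hω =>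
        (hmem ω').2 (hle.trans_lt ((hmem ω).1 hω))
      rintro w ⟨hwS, hw⟩
      rw [Finset.iSup_insert] at hw
      obtain ⟨u, hu, v, hv, rfl⟩ := Submodule.mem_sup.1 hw
      simp only [hmem] at hv ih
      obtain ⟨o, ho, r, hr, hou⟩ := Submodule.mem_sup.1 (h α ⟨hu, Submodule.mem_sup.2
        ⟨u + v, hwS, -v, neg_mem hv, add_neg_cancel_right u v⟩⟩).2
      have hrest : r + v ∈ O := ih hs' ⟨?_, add_mem hr hv⟩
      · rw [← hou, add_assoc]
        exact add_mem ho hrest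
      · have : r + v = u + v - o := by rw [← hou]; abel
        rw [this]
        exact sub_mem hwS (hO ho)
  have := Fintype.ofFinite Ω
  simpa [hφ, ← iSup_univ] using
    hlower Finset.univ (by simp only [Finset.coe_univ, isLowerSet_univ])

theorem HasChainPartition.exists_finset_orbitSpan_eq [SMulCommClass N F W] [MulAction N Ω]
    [LinearOrder Ω] [Finite Ω] (hφ : ∀ (g : N) ω, ∀ w ∈ φ ω, g • w ∈ φ (g • ω))
    (hφ' : iSup φ = ⊤) [∀ ω, FiniteDimensional F (φ ω)] {a : ℕ}
    (ha : ∀ ω, Module.finrank F (φ ω) ≤ a) (hS : ∀ g : N, ∀ w ∈ S, g • w ∈ S) {b : ℕ → ℝ}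
    (hb : HasChainPartition (Movable N (Ω := Ω)) b) :
    ∃ T : Finset W, (T.card : ℝ) ≤ a * b 0 ∧ orbitSpan N F (T : Set W) = S := by
  classical
  obtain ⟨I, _, c, e, he, hs⟩ := hb
  choose T hTS hT hle using fun i => exists_finset_leadSpace_le_of_chain hφ ha hS
    (fun j => e ⟨i, j⟩) (he i)
  have hTS' : (Finset.univ.biUnion T : Set W) ⊆ S := by
    rw [Finset.coe_biUnion]
    exact Set.iUnion₂_subset fun i _ => hTS i
  refine ⟨Finset.univ.biUnion T, ?_, (orbitSpan_le hS hTS').antisymm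
    (le_of_leadSpace_le hφ' (orbitSpan_le hS hTS') fun ω => ?_)⟩
  · calc ((Finset.univ.biUnion T).card : ℝ)
        ≤ ∑ i, ((T i).card : ℝ) := by exact_mod_cast Finset.card_biUnion_le
      _ ≤ ∑ i, a * (chainCount 0 (c i) : ℝ) :=
          Finset.sum_le_sum fun i _ => by exact_mod_cast hT i
      _ ≤ a * b 0 := by
          rw [← Finset.mul_sum]
          exact mul_le_mul_of_nonneg_left (hs 0) (Nat.cast_nonneg a)
  · obtain ⟨⟨i, j⟩, rfl⟩ := e.surjective ω
    refine (hle i j).trans (leadSpace_mono (orbitSpan_mono ?_) _)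
    exact Finset.coe_subset.2 (Finset.subset_biUnion_of_mem T (Finset.mem_univ i))

end LeadSpace

section Hall

variable {G : Type*} [Group G] {p : ℕ}

lemma exists_normal_isPGroup_or_not_dvd_card [Finite G] [Group.IsSolvable G] [Nontrivial G]
    [Fact p.Prime] : ∃ M : Subgroup G, M.Normal ∧ M ≠ ⊥ ∧ (IsPGroup p M ∨ ¬p ∣ Nat.card M) := by
  obtain ⟨A, hA, hAne, hAcomm⟩ := exists_normal_not_le_commutator_le (bot_ne_top (α := Subgroup G))
  by_cases hp : p ∣ Nat.card A
  swap
  · exact ⟨A, hA, fun h => hAne h.le, .inr hp⟩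
  have : IsMulCommutative A := Subgroup.le_centralizer_iff_isMulCommutative.1
    (Subgroup.commutator_eq_bot_iff_le_centralizer.1 (le_bot_iff.1 hAcomm))
  let P : Sylow p A := default
  have : P.Normal := inferInstance
  have : P.Characteristic := P.characteristic_of_normal this
  refine ⟨(P : Subgroup A).map A.subtype, inferInstance, ?_, .inl (P.isPGroup'.map _)⟩
  rw [Ne, Subgroup.map_eq_bot_iff_of_injective _ A.subtype_injective]
  exact P.ne_bot_of_dvd_card hp

lemma exists_le_not_dvd_card_relIndex_eq_pow [hp : Fact p.Prime] {M K : Subgroup G} [M.Normal]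
    (hM : IsPGroup p M) [Finite M] (hMK : M ≤ K) (hK : ¬p ∣ M.relIndex K) :
    ∃ Q ≤ K, ¬p ∣ Nat.card Q ∧ ∃ k, Q.relIndex K = p ^ k := by
  obtain ⟨k, hk⟩ := hM.exists_card_eq
  have hcard : Nat.card (M.subgroupOf K) = p ^ k := by
    rw [← hk, Nat.card_congr (Subgroup.subgroupOfEquivOfLe hMK).toEquiv]
  obtain ⟨R, hR⟩ := Subgroup.exists_right_complement'_of_coprime (N := M.subgroupOf K)
    (hcard ▸ Nat.Coprime.pow_left _ (hp.out.coprime_iff_not_dvd.2 hK))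
  refine ⟨R.map K.subtype, Subgroup.map_subtype_le R, ?_, k, ?_⟩
  · rwa [Subgroup.card_map_of_injective K.subtype_injective, ← hR.symm.index_eq_card]
  · rw [Subgroup.relIndex, Subgroup.subgroupOf,
      Subgroup.comap_map_eq_self_of_injective K.subtype_injective, hR.index_eq_card, hcard]

theorem exists_subgroup_not_dvd_card_index_eq_pow [Finite G] [Group.IsSolvable G]
    [hp : Fact p.Prime] : ∃ Q : Subgroup G, ¬p ∣ Nat.card Q ∧ ∃ k, Q.index = p ^ k := by
  induction hcard : Nat.card G using Nat.strong_induction_on generalizing G with | h c ih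
  rcases subsingleton_or_nontrivial G with _ | _
  · exact ⟨⊤, by simpa using hp.out.ne_one, 0, by simp⟩
  obtain ⟨M, _, hMne, hM⟩ := exists_normal_isPGroup_or_not_dvd_card (G := G) (p := p)
  have hlt : Nat.card (G ⧸ M) < c := by
    rw [← hcard, M.card_eq_card_quotient_mul_card_subgroup]
    exact lt_mul_of_one_lt_right Nat.card_pos (M.one_lt_card_iff_ne_bot.2 hMne)
  obtain ⟨Q, hQ, k, hk⟩ := ih _ hlt (G := G ⧸ M) rfl
  let K := Q.comap (QuotientGroup.mk' M)
  have hMK : M ≤ K := QuotientGroup.le_comap_mk' M Q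
  have hKindex : K.index = p ^ k := by
    rw [← hk, Subgroup.index_comap_of_surjective _ (QuotientGroup.mk'_surjective M)]
  have hKrel : M.relIndex K = Nat.card Q := by
    have hrel := Subgroup.relIndex_comap ⊥ (QuotientGroup.mk' M) K
    rwa [MonoidHom.comap_bot, QuotientGroup.ker_mk', Subgroup.relIndex_bot_left,
      Subgroup.map_comap_eq_self_of_surjective (QuotientGroup.mk'_surjective M)] at hrel
  rcases hM with hM | hM
  · obtain ⟨R, hRK, hR, l, hl⟩ := exists_le_not_dvd_card_relIndex_eq_pow hM hMK (hKrel ▸ hQ)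
    exact ⟨R, hR, l + k, by rw [← Subgroup.relIndex_mul_index hRK, hl, hKindex, pow_add]⟩
  · refine ⟨K, ?_, k, hKindex⟩
    rw [← Subgroup.relIndex_bot_left, ← Subgroup.relIndex_mul_relIndex _ _ _ bot_le hMK, hKrel,
      Subgroup.relIndex_bot_left, hp.out.dvd_mul]
    exact not_or.2 ⟨hM, hQ⟩

end Hall

section CountOrbits

variable {N Ω : Type*} [Group N] [MulAction N Ω] [MulAction.IsPretransitive N Ω] {p : ℕ}

lemma ordCompl_card_dvd_card_orbit [Finite Ω] [Nonempty Ω] (hp : p.Prime) {Q : Subgroup N} {k : ℕ}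
    (hQ : Q.index = p ^ k) (ω : Ω) : ordCompl[p] (Nat.card Ω) ∣ Nat.card (MulAction.orbit Q ω) := by
  have hcard : (MulAction.stabilizer N ω ⊓ Q).index = Nat.card (MulAction.orbit Q ω) * p ^ k := by
    rw [← hQ, Nat.card_coe_set_eq, ← MulAction.index_stabilizer,
      ← Subgroup.relIndex_mul_index (inf_le_right (b := Q)), Subgroup.inf_relIndex_right]
    rfl
  have hdvd : Nat.card Ω ∣ Nat.card (MulAction.orbit Q ω) * p ^ k := by
    rw [← hcard, ← MulAction.index_stabilizer_of_transitive N ω]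
    exact Subgroup.index_dvd_of_le inf_le_left
  exact ((Nat.coprime_ordCompl hp Nat.card_pos.ne').pow_left k).symm.dvd_of_dvd_mul_right
    ((Nat.ordCompl_dvd _ p).trans hdvd)

lemma card_orbits_le_pow [Finite Ω] [Nonempty Ω] (hp : p.Prime) {Q : Subgroup N} {k : ℕ}
    (hQ : Q.index = p ^ k) :
    Nat.card (MulAction.orbitRel.Quotient Q Ω) ≤ p ^ (Nat.card Ω).factorization p := by
  have := Fintype.ofFinite (MulAction.orbitRel.Quotient Q Ω)
  have hle : ∀ x : MulAction.orbitRel.Quotient Q Ω,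
      ordCompl[p] (Nat.card Ω) ≤ Nat.card (MulAction.orbitRel.Quotient.orbit x) := by
    rintro ⟨ω⟩
    have : Nonempty (MulAction.orbit Q ω) := ⟨⟨ω, MulAction.mem_orbit_self ω⟩⟩
    change _ ≤ Nat.card (MulAction.orbit Q ω)
    exact Nat.le_of_dvd Nat.card_pos (ordCompl_card_dvd_card_orbit hp hQ ω)
  refine Nat.le_of_mul_le_mul_right ?_ (Nat.ordCompl_pos p (Nat.card_pos (α := Ω)).ne')
  calc Nat.card (MulAction.orbitRel.Quotient Q Ω) * ordCompl[p] (Nat.card Ω)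
      ≤ ∑ x : MulAction.orbitRel.Quotient Q Ω,
          Nat.card (MulAction.orbitRel.Quotient.orbit x) := by
        rw [Nat.card_eq_fintype_card, ← Finset.card_univ, ← smul_eq_mul]
        exact Finset.card_nsmul_le_sum _ _ _ fun x _ => hle x
    _ = Nat.card Ω := by
        rw [← Nat.card_sigma, Nat.card_congr (MulAction.selfEquivSigmaOrbits' Q Ω)]
    _ = p ^ (Nat.card Ω).factorization p * ordCompl[p] (Nat.card Ω) :=
        (Nat.ordProj_mul_ordCompl_eq_self _ p).symm

variable (N Ω) in
lemma exists_subgroup_card_ne_zero_card_orbits_le [Finite Ω] [Nonempty Ω] [Finite N]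
    [Group.IsSolvable N] (F : Type*) [Field F] (p : ℕ) [ExpChar F p] :
    ∃ Q : Subgroup N, (Nat.card Q : F) ≠ 0 ∧
      Nat.card (MulAction.orbitRel.Quotient Q Ω) ≤ p ^ (Nat.card Ω).factorization p := by
  rcases ‹ExpChar F p› with _ | hp
  · refine ⟨⊤, Nat.cast_ne_zero.2 Nat.card_pos.ne', ?_⟩
    have : Subsingleton (MulAction.orbitRel.Quotient (⊤ : Subgroup N) Ω) := by
      refine MulAction.pretransitive_iff_subsingleton_quotient _ _ |>.1 ⟨fun α β => ?_⟩
      obtain ⟨g, hg⟩ := MulAction.exists_smul_eq N α β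
      exact ⟨⟨g, Subgroup.mem_top g⟩, hg⟩
    simpa using Finite.card_le_one_iff_subsingleton.2 this
  · have : Fact p.Prime := ⟨hp⟩
    obtain ⟨Q, hQ, k, hk⟩ := exists_subgroup_not_dvd_card_index_eq_pow (G := N) (p := p)
    exact ⟨Q, fun h => hQ ((CharP.cast_eq_zero_iff F p _).1 h), card_orbits_le_pow hp hk⟩

end CountOrbits

section Maschke

variable {N F W Ω : Type*} [Group N] [Field F] [AddCommGroup W] [Module F W] [DistribMulAction N W]
  [SMulCommClass N F W] {S : Submodule F W}

lemma exists_isCompl_of_card_ne_zero [Finite N] (hN : (Nat.card N : F) ≠ 0)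
    (hS : ∀ g : N, ∀ w ∈ S, g • w ∈ S) :
    ∃ C : Submodule F W, (∀ g : N, ∀ w ∈ C, g • w ∈ C) ∧ IsCompl S C := by
  have : NeZero (Nat.card N : F) := ⟨hN⟩
  let S' : Subrepresentation (Representation.ofDistribMulAction F N W) := ⟨S, fun g w => hS g w⟩
  obtain ⟨C, hC⟩ := exists_isCompl S'
  refine ⟨C.toSubmodule, fun g w hw => C.apply_mem_toSubmodule g hw, ?_, ?_⟩
  · exact disjoint_iff.2 (congrArg Subrepresentation.toSubmodule hC.disjoint.eq_bot)
  · exact codisjoint_iff.2 (congrArg Subrepresentation.toSubmodule hC.codisjoint.eq_top)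

lemma exists_finset_orbitSpan_eq_of_orbitSpan_eq_top [Finite N] (hN : (Nat.card N : F) ≠ 0)
    (hS : ∀ g : N, ∀ w ∈ S, g • w ∈ S) {X : Finset W} (hX : orbitSpan N F (X : Set W) = ⊤) :
    ∃ T : Finset W, T.card ≤ X.card ∧ orbitSpan N F (T : Set W) = S := by
  classical
  obtain ⟨C, hC, hSC⟩ := exists_isCompl_of_card_ne_zero hN hS
  choose f hfS r hr hfr using fun w =>
    Submodule.mem_sup.1 (hSC.sup_eq_top.ge (Submodule.mem_top (x := w)))
  have hTS : ((X.image f : Finset W) : Set W) ⊆ S := by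
    rw [Finset.coe_image, Set.image_subset_iff]
    exact fun x _ => hfS x
  refine ⟨X.image f, Finset.card_image_le, (orbitSpan_le hS hTS).antisymm ?_⟩
  have htop : orbitSpan N F ((X.image f : Finset W) : Set W) ⊔ C = ⊤ := by
    refine top_unique (hX.symm.le.trans (orbitSpan_le (fun g w hw => ?_) fun x hx => ?_))
    · obtain ⟨u, hu, v, hv, rfl⟩ := Submodule.mem_sup.1 hw
      rw [smul_add]
      exact Submodule.add_mem_sup (smul_mem_orbitSpan g u hu) (hC g v hv)
    · rw [← hfr x]
      exact Submodule.add_mem_sup (subset_orbitSpan (Finset.mem_image_of_mem f hx)) (hr x)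
  exact (eq_of_le_of_inf_le_of_sup_le (orbitSpan_le hS hTS)
    (hSC.inf_eq_bot.le.trans bot_le) (le_top.trans htop.ge)).ge

variable [MulAction N Ω] {φ : Ω → Submodule F W}

lemma exists_finset_orbitSpan_eq_top [Finite Ω]
    (hφ : ∀ (g : N) ω, ∀ w ∈ φ ω, g • w ∈ φ (g • ω)) (hφ' : iSup φ = ⊤)
    [∀ ω, FiniteDimensional F (φ ω)] {a : ℕ} (ha : ∀ ω, Module.finrank F (φ ω) ≤ a) :
    ∃ T : Finset W, T.card ≤ a * Nat.card (MulAction.orbitRel.Quotient N Ω) ∧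
      orbitSpan N F (T : Set W) = ⊤ := by
  classical
  have := Fintype.ofFinite (MulAction.orbitRel.Quotient N Ω)
  choose X hXcard hX using fun ω => exists_finset_card_eq_finrank_span_eq (φ ω)
  let T := Finset.univ.biUnion fun x : MulAction.orbitRel.Quotient N Ω => X x.out
  refine ⟨T, ?_, top_unique (hφ' ▸ iSup_le fun ω w hw => ?_)⟩
  · rw [mul_comm, Nat.card_eq_fintype_card, ← Finset.card_univ]
    exact Finset.card_biUnion_le_card_mul _ _ _ fun x _ => (hXcard _).trans_le (ha _)
  · have hrep : φ (Quotient.mk (MulAction.orbitRel N Ω) ω).out ≤ orbitSpan N F (T : Set W) := by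
      rw [← hX, Submodule.span_le]
      exact (Finset.coe_subset.2 (Finset.subset_biUnion_of_mem (fun x => X (Quotient.out x))
        (Finset.mem_univ _))).trans subset_orbitSpan
    obtain ⟨g, hg⟩ : ∃ g : N, g • ω = (Quotient.mk (MulAction.orbitRel N Ω) ω).out :=
      MulAction.orbitRel_apply.1 (Quotient.mk_out ω)
    rw [← inv_smul_smul g w]
    exact smul_mem_orbitSpan g⁻¹ _ (hrep (hg ▸ hφ g ω w hw))

theorem exists_finset_card_le_mul_pow_orbitSpan_eq [Finite N] [Group.IsSolvable N]
    [MulAction.IsPretransitive N Ω] [Finite Ω] [Nonempty Ω] (p : ℕ) [ExpChar F p]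
    (hφ : ∀ (g : N) ω, ∀ w ∈ φ ω, g • w ∈ φ (g • ω)) (hφ' : iSup φ = ⊤)
    [∀ ω, FiniteDimensional F (φ ω)] {a : ℕ} (ha : ∀ ω, Module.finrank F (φ ω) ≤ a)
    (hS : ∀ g : N, ∀ w ∈ S, g • w ∈ S) :
    ∃ T : Finset W, T.card ≤ a * p ^ (Nat.card Ω).factorization p ∧
      orbitSpan N F (T : Set W) = S := by
  obtain ⟨Q, hQ, horbits⟩ := exists_subgroup_card_ne_zero_card_orbits_le N Ω F p
  obtain ⟨X, hXcard, hX⟩ := exists_finset_orbitSpan_eq_top (fun g : Q => hφ g) hφ' ha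
  obtain ⟨T, hTcard, rfl⟩ := exists_finset_orbitSpan_eq_of_orbitSpan_eq_top hQ (fun g => hS g) hX
  refine ⟨T, hTcard.trans (hXcard.trans (Nat.mul_le_mul_left a horbits)),
    (orbitSpan_le hS subset_orbitSpan).antisymm ?_⟩
  exact Submodule.span_mono fun _ ⟨g, t, ht, hw⟩ => ⟨g, t, ht, hw⟩

end Maschke

section InducedModule

theorem exists_finset_card_le_mul_min_orbitSpan_eq {N F W Ω : Type*} [Group N] [Finite N]
    [Group.IsSolvable N] [MulAction N Ω] [MulAction.IsPretransitive N Ω] [Nonempty Ω] [Field F]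
    (p : ℕ) [ExpChar F p] [AddCommGroup W] [Module F W] [DistribMulAction N W] [SMulCommClass N F W]
    {φ : Ω → Submodule F W} (hφ : ∀ (g : N) ω, ∀ w ∈ φ ω, g • w ∈ φ (g • ω)) (hφ' : iSup φ = ⊤)
    [∀ ω, FiniteDimensional F (φ ω)] {a : ℕ} (ha : ∀ ω, Module.finrank F (φ ω) ≤ a)
    {S : Submodule F W} (hS : ∀ g : N, ∀ w ∈ S, g • w ∈ S) :
    ∃ T : Finset W, (T.card : ℝ) ≤ a * min (wstar (Nat.card Ω))
        ((p ^ (Nat.card Ω).factorization p : ℕ) : ℝ) ∧ orbitSpan N F (T : Set W) = S := by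
  have : Finite Ω := Finite.of_surjective _ (MulAction.surjective_smul N (Classical.arbitrary Ω))
  rcases min_choice (wstar (Nat.card Ω)) ((p ^ (Nat.card Ω).factorization p : ℕ) : ℝ) with h | h
  · obtain ⟨_, hchain⟩ := exists_linearOrder_hasChainPartition N Ω
    rw [h, ← scaleBound_chainCount_one]
    exact hchain.exists_finset_orbitSpan_eq hφ hφ' ha hS
  · obtain ⟨T, hcard, hT⟩ := exists_finset_card_le_mul_pow_orbitSpan_eq p hφ hφ' ha hS
    exact ⟨T, by rw [h]; exact_mod_cast hcard, hT⟩

variable {G F W : Type*} [Group G] [Field F] [AddCommGroup W] [Module F W] [DistribMulAction G W]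

lemma dMod_le_card {N : Subgroup G} {S : Submodule F W} (hS : ∀ g : G, ∀ w ∈ S, g • w ∈ S)
    {T : Finset W} (hT : orbitSpan N F (T : Set W) = S) : dMod G S ≤ T.card := by
  have hTS : (T : Set W) ⊆ S := hT ▸ subset_orbitSpan
  refine Nat.sInf_le ⟨T, rfl, hTS, (orbitSpan_le hS hTS).antisymm (hT.ge.trans ?_)⟩
  exact Submodule.span_mono fun _ ⟨g, t, ht, hw⟩ => ⟨g, t, ht, hw⟩

lemma isPretransitive_quotient_of_exists_mul_mem {H N : Subgroup G}
    (h : ∀ g g' : G, ∃ x ∈ N, g * x * g'⁻¹ ∈ H) : MulAction.IsPretransitive N (G ⧸ H) := by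
  refine ⟨?_⟩
  rintro ⟨g⟩ ⟨g'⟩
  obtain ⟨x, hx, hxH⟩ := h g⁻¹ g'⁻¹
  exact ⟨⟨x⁻¹, inv_mem hx⟩, QuotientGroup.eq.2 (by simpa [mul_assoc] using hxH)⟩

theorem stmt_17_general {H : Subgroup G} {n : ℕ} (hidx : H.index = n) (p : ℕ) [ExpChar F p]
    [SMulCommClass G F W] {V : Submodule F W} [FiniteDimensional F V] {a : ℕ}
    (ha : Module.finrank F V = a) {φ : G ⧸ H → Submodule F W}
    (hφ : ∀ g : G, φ (g : G ⧸ H) = V.map (DistribSMul.toLinearMap F W g)) (hφ' : iSup φ = ⊤)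
    (N : Subgroup G) [Finite N] [Group.IsSolvable N]
    (hN : ∀ g g' : G, ∃ x ∈ N, g * x * g'⁻¹ ∈ H)
    {S : Submodule F W} (hS : ∀ g : G, ∀ w ∈ S, g • w ∈ S) :
    (dMod G S : ℝ) ≤ a * min (wstar n) ((p ^ n.factorization p : ℕ) : ℝ) := by
  have := isPretransitive_quotient_of_exists_mul_mem hN
  have hstable : ∀ (x : N) ω, ∀ w ∈ φ ω, x • w ∈ φ (x • ω) := by
    rintro x ⟨g⟩ w hw
    obtain ⟨v, hv, rfl⟩ := (hφ g).le hw
    exact (hφ (x * g)).ge ⟨v, hv, mul_smul (x : G) g v⟩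
  have hfin : ∀ ω, FiniteDimensional F (φ ω) := by
    rintro ⟨g⟩
    change FiniteDimensional F (φ (g : G ⧸ H))
    rw [hφ]
    infer_instance
  have hrank : ∀ ω, Module.finrank F (φ ω) ≤ a := by
    rintro ⟨g⟩
    change Module.finrank F (φ (g : G ⧸ H)) ≤ a
    rw [hφ, ← ha]
    exact Submodule.finrank_map_le _ _
  obtain ⟨T, hcard, hT⟩ :=
    exists_finset_card_le_mul_min_orbitSpan_eq p hstable hφ' hrank fun x => hS x
  rw [← Subgroup.index_eq_card, hidx] at hcard
  exact (Nat.cast_le.2 (dMod_le_card hS hT)).trans hcard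

end InducedModule

/-- Let `G` be a finite group, `H ≤ G` of index `n ≥ 2`, `F` a field of characteristic
`p > 0`, `V` an `H`-module of finite dimension `a` over `F`, and `S` a submodule of the
induced module `V↑G` (presented internally: `W` is a `G`-module containing an `H`-stable
subspace `V` of dimension `a` such that `W` is the direct sum of the translates `g • V` over
the cosets `g H ∈ G ⧸ H`).  If `G` contains a soluble subgroup `N` acting transitively on the
set of right cosets of `H` in `G` (i.e. for all `g, g'`, some `x ∈ N` has `Hgx = Hg'`), then
`d_G(S) ≤ a·E_sol(n,p) = a·min{w*(n), n_p}`. -/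
theorem stmt_17 (G : Type*) [Group G] [Fintype G]
    (H : Subgroup G) (n : ℕ) (hn : 2 ≤ n) (hidx : H.index = n)
    (F W : Type*) [Field F] (p : ℕ) [Fact p.Prime] (hchar : CharP F p)
    [AddCommGroup W] [Module F W] [DistribMulAction G W] [SMulCommClass G F W]
    (V : Submodule F W) [FiniteDimensional F V] (a : ℕ) (ha : Module.finrank F V = a)
    (hVstable : ∀ g ∈ H, ∀ v ∈ V, g • v ∈ V)
    (hinduced : ∃ φ : G ⧸ H → Submodule F W,
      (∀ g : G, φ (g : G ⧸ H) = V.map (DistribMulAction.toLinearMap F W g)) ∧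
        iSupIndep φ ∧ iSup φ = ⊤)
    (N : Subgroup G) (hNsol : IsSolvable N)
    (hNtrans : ∀ g g' : G, ∃ x ∈ N, g * x * g'⁻¹ ∈ H)
    (S : Submodule F W) (hSstable : ∀ g : G, ∀ w ∈ S, g • w ∈ S) :
    (dMod G S : ℝ) ≤ a * min (wstar n) ((p ^ n.factorization p : ℕ) : ℝ) := by
  obtain ⟨φ, hφ, -, hφ'⟩ := hinduced
  have : ExpChar F p := .prime Fact.out
  have : Group.IsSolvable N := hNsol
  exact stmt_17_general hidx p ha hφ hφ' N hNtrans hSstable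
end

section
/- For every integer k ≥ 1 there exists a transitive permutation group G of degree 2^{2k} which is a 2-group and satisfies d(G) = binom(2k−1, k−1) + 2k − 1 = (1/2)·binom(2k, k) + 2k − 1. Consequently, for every ε > 0 and all sufficiently large k, such a group satisfies d(G) ≥ (√(2/π) − ε)·2^{2k}/(2√(2k)) + 2k − 1. -/
/-- `dGen G` is `d(G)`: the minimal cardinality of a generating set of the group `G`. -/
noncomputable def dGen (G : Type*) [Group G] : ℕ :=
  sInf {k : ℕ | ∃ S : Finset G, S.card = k ∧ Subgroup.closure (S : Set G) = ⊤}

/-!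
The radical powers of `𝔽₂[A]`, `A = 𝔽₂ ^ m`, are the Reed–Muller codes: the functions on `A` of
degree at most `k`. Since `x_{T ∪ i}` minus its translate along the `i`-th basis vector is `x_T`,
the code is generated as a module by its `binom(m, k)` monomials of degree `k`, so its semidirect
product with `A` has `binom(m, k) + m` generators. None can be spared: translations preserve the
coefficients of degree `k`, so the group maps onto a vector space of that dimension. For
`m = 2k - 1` this is half the central binomial coefficient plus `2k - 1`, and Wallis' product gives
the asymptotics.
-/

open Finset
open scoped translate

section Rank

open Module

lemma dGen_eq_rank (G : Type*) [Group G] [Group.FG G] : dGen G = Group.rank G := by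
  obtain ⟨S, hcard, hS⟩ := Group.rank_spec G
  refine le_antisymm (Nat.sInf_le ⟨S, hcard, hS⟩) (le_csInf ⟨_, S, hcard, hS⟩ ?_)
  rintro _ ⟨T, rfl, hT⟩
  exact Group.rank_le hT

lemma finrank_le_rank_of_surjective (R : Type*) {G V : Type*} [Ring R] [StrongRankCondition R]
    [Group G] [Group.FG G] [AddCommGroup V] [Module R V] (φ : G →* Multiplicative V)
    (hφ : Function.Surjective φ) : finrank R V ≤ Group.rank G := by
  classical
  obtain ⟨S, hcard, hS⟩ := Group.rank_spec G
  let T : Finset V := S.image fun g => (φ g).toAdd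
  have hle : Subgroup.closure (S : Set G) ≤
      (AddSubgroup.toSubgroup (Submodule.span R (T : Set V)).toAddSubgroup).comap φ :=
    (Subgroup.closure_le _).2 fun g hg => Submodule.subset_span (mem_image_of_mem _ hg)
  have hspan : Submodule.span R (T : Set V) = ⊤ := by
    refine eq_top_iff.2 fun v _ => ?_
    obtain ⟨g, hg⟩ := hφ (Multiplicative.ofAdd v)
    have hgv : φ g ∈ AddSubgroup.toSubgroup (Submodule.span R (T : Set V)).toAddSubgroup :=
      hle (hS ▸ Subgroup.mem_top g)
    rwa [hg] at hgv
  calc finrank R V = finrank R (Submodule.span R (T : Set V)) := by rw [hspan, finrank_top]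
    _ ≤ #T := finrank_span_finset_le_card T
    _ ≤ #S := card_image_le
    _ = Group.rank G := hcard

end Rank

section SkewTranslation

variable {A M : Type*} [AddCommGroup A] [AddCommGroup M]

/-- The permutation `(a, z) ↦ (a + b, z + f (a + b))` of `A × M`: the translation by `b` of the
base `A`, followed by the translation of each fibre `{a} × M` by `f a`. -/
def skewTranslation (b : A) (f : A → M) : Equiv.Perm (A × M) :=
  Equiv.prodShear (Equiv.addRight b) fun a => Equiv.addRight (f (a + b))

@[simp]
lemma skewTranslation_apply (b : A) (f : A → M) (x : A × M) :
    skewTranslation b f x = (x.1 + b, x.2 + f (x.1 + b)) := rfl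

@[simp]
lemma skewTranslation_zero : skewTranslation (0 : A) (0 : A → M) = 1 := by
  ext1 x
  simp

lemma skewTranslation_mul (b c : A) (f g : A → M) :
    skewTranslation b f * skewTranslation c g = skewTranslation (b + c) (f + τ b g) := by
  ext x
  · simp [add_comm, add_left_comm]
  · simp [add_comm, add_left_comm]

lemma skewTranslation_inv (b : A) (f : A → M) :
    (skewTranslation b f)⁻¹ = skewTranslation (-b) (-τ (-b) f) := by
  rw [inv_eq_iff_mul_eq_one, skewTranslation_mul, translate_neg_right, ← translate_add]
  simp

lemma skewTranslation_pow (b : A) (f : A → M) (n : ℕ) :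
    skewTranslation b f ^ n = skewTranslation (n • b) (∑ i ∈ range n, τ (i • b) f) := by
  induction n with
  | zero => simp
  | succ n ih => rw [pow_succ, ih, skewTranslation_mul, succ_nsmul, sum_range_succ]

/-- The fibrewise translations `skewTranslation 0 f`, as a homomorphism in `f`. -/
def fiberTranslation : Multiplicative (A → M) →* Equiv.Perm (A × M) :=
  MonoidHom.mk' (fun f => skewTranslation 0 f.toAdd) fun f g => by simp [skewTranslation_mul]

/-- The translations `skewTranslation b 0` of the base, as a homomorphism in `b`. -/
def baseTranslation : Multiplicative A →* Equiv.Perm (A × M) :=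
  MonoidHom.mk' (fun b => skewTranslation b.toAdd 0) fun b c => by simp [skewTranslation_mul]

lemma skewTranslation_zero_mul_skewTranslation (b : A) (f : A → M) :
    skewTranslation 0 f * skewTranslation b 0 = skewTranslation b f := by
  simp [skewTranslation_mul]

lemma skewTranslation_conj (b : A) (f : A → M) :
    skewTranslation b 0 * skewTranslation 0 f * (skewTranslation b 0)⁻¹ =
      skewTranslation 0 (τ b f) := by
  simp [skewTranslation_inv, skewTranslation_mul]

/-- The element `b` in `skewTranslation b f`, read off from the image of `0`. -/
def baseShift (σ : Equiv.Perm (A × M)) : A := (σ 0).1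

/-- The function `f` in `skewTranslation b f`, read off from the preimages of the zero section. -/
def fiberShift (σ : Equiv.Perm (A × M)) (a : A) : M := -(σ⁻¹ (a, 0)).2

@[simp]
lemma baseShift_skewTranslation (b : A) (f : A → M) : baseShift (skewTranslation b f) = b := by
  simp [baseShift]

@[simp]
lemma fiberShift_skewTranslation (b : A) (f : A → M) : fiberShift (skewTranslation b f) = f := by
  ext a
  simp [fiberShift, skewTranslation_inv]

variable (C : AddSubgroup (A → M)) (hC : ∀ b, ∀ f ∈ C, τ b f ∈ C)

/-- The semidirect product `C ⋊ A` of the base translations and the fibrewise translations from a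
translation-invariant group `C`, acting on `A × M`. If `C` contains the constants, this is the
action on the cosets of the complement `{f ∈ C | f 0 = 0}` to the constants. -/
def skewTranslationGroup : Subgroup (Equiv.Perm (A × M)) where
  carrier := {σ | ∃ b, ∃ f ∈ C, skewTranslation b f = σ}
  mul_mem' := by
    rintro _ _ ⟨b, f, hf, rfl⟩ ⟨c, g, hg, rfl⟩
    exact ⟨b + c, _, add_mem hf (hC b g hg), (skewTranslation_mul b c f g).symm⟩
  one_mem' := ⟨0, 0, zero_mem C, skewTranslation_zero⟩
  inv_mem' := by
    rintro _ ⟨b, f, hf, rfl⟩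
    exact ⟨-b, _, neg_mem (hC (-b) f hf), (skewTranslation_inv b f).symm⟩

variable {C}

lemma skewTranslation_mem (b : A) {f : A → M} (hf : f ∈ C) :
    skewTranslation b f ∈ skewTranslationGroup C hC := ⟨b, f, hf, rfl⟩

lemma isPretransitive_skewTranslationGroup (hconst : ∀ z, Function.const A z ∈ C) :
    MulAction.IsPretransitive (skewTranslationGroup C hC) (A × M) where
  exists_smul_eq x y := by
    refine ⟨⟨_, skewTranslation_mem hC (y.1 - x.1) (hconst (y.2 - x.2))⟩, ?_⟩
    change skewTranslation _ _ x = y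
    simp

lemma isPGroup_skewTranslationGroup (p : ℕ) [Module (ZMod p) A] [Module (ZMod p) M] :
    IsPGroup p (skewTranslationGroup C hC) := by
  rintro ⟨_, b, f, -, rfl⟩
  have hpow : skewTranslation b f ^ p ^ 2 = 1 := by
    rw [sq, pow_mul, skewTranslation_pow, ZModModule.char_nsmul_eq_zero, skewTranslation_pow]
    simp [ZModModule.char_nsmul_eq_zero]
  exact ⟨2, Subtype.ext hpow⟩

/-- The homomorphism `C ⋊ A → A × V`, `(b, f) ↦ (b, ℓ f)`, attached to a translation-invariant
additive map `ℓ` on `C`. It bounds the number of generators of `C ⋊ A` from below. -/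
def coinvariantHom {V : Type*} [AddCommGroup V] (ℓ : (A → M) →+ V)
    (hℓ : ∀ b, ∀ f ∈ C, ℓ (τ b f) = ℓ f) :
    skewTranslationGroup C hC →* Multiplicative (A × V) :=
  MonoidHom.mk'
    (fun σ => Multiplicative.ofAdd (baseShift (σ : Equiv.Perm (A × M)), ℓ (fiberShift σ.1))) <| by
    rintro ⟨_, b, f, hf, rfl⟩ ⟨_, c, g, hg, rfl⟩
    simp [skewTranslation_mul, hℓ b g hg, ← ofAdd_add]

lemma coinvariantHom_surjective {V : Type*} [AddCommGroup V] (ℓ : (A → M) →+ V)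
    (hℓ : ∀ b, ∀ f ∈ C, ℓ (τ b f) = ℓ f) (hsurj : ∀ v, ∃ f ∈ C, ℓ f = v) :
    Function.Surjective (coinvariantHom hC ℓ hℓ) := by
  rintro ⟨b, v⟩
  obtain ⟨f, hf, rfl⟩ := hsurj v
  refine ⟨⟨_, skewTranslation_mem hC b hf⟩, ?_⟩
  change Multiplicative.ofAdd (baseShift (skewTranslation b f), ℓ (fiberShift _)) = _
  rw [baseShift_skewTranslation, fiberShift_skewTranslation]
  rfl

end SkewTranslation

section Multiaffine

variable {R ι : Type*} [CommRing R]

/-- The squarefree monomial `∏ i ∈ S, X i`, as a function on `ι → R`. -/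
def squarefreeMonomial (S : Finset ι) (a : ι → R) : R := ∏ i ∈ S, a i

variable (R ι) in
/-- The functions on `ι → R` given by polynomials of total degree at most `k` and of degree at most
`1` in each variable. For `R = 𝔽₂` and `m` variables this is the Reed–Muller code `RM(k, m)`, that
is, the power `m - k` of the radical of the group algebra of `𝔽₂ ^ m`. -/
def multiaffine (k : ℕ) : Submodule R ((ι → R) → R) :=
  Submodule.span R (squarefreeMonomial '' {S | #S ≤ k})

lemma squarefreeMonomial_mem_multiaffine {k : ℕ} {S : Finset ι} (hS : #S ≤ k) :
    squarefreeMonomial S ∈ multiaffine R ι k :=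
  Submodule.subset_span (Set.mem_image_of_mem _ hS)

lemma const_mem_multiaffine (k : ℕ) (z : R) : Function.const (ι → R) z ∈ multiaffine R ι k := by
  have hconst : Function.const (ι → R) z = z • squarefreeMonomial (∅ : Finset ι) := by
    ext a
    simp [squarefreeMonomial]
  rw [hconst]
  exact Submodule.smul_mem _ z (squarefreeMonomial_mem_multiaffine (by simp))

lemma translate_squarefreeMonomial [DecidableEq ι] (b : ι → R) (U : Finset ι) :
    τ b (squarefreeMonomial U) =
      ∑ T ∈ U.powerset, squarefreeMonomial (U \ T) (-b) • squarefreeMonomial T := by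
  ext a
  simp [squarefreeMonomial, sub_eq_add_neg, prod_add, mul_comm]

lemma translate_mem_multiaffine {k : ℕ} (b : ι → R) {f : (ι → R) → R}
    (hf : f ∈ multiaffine R ι k) : τ b f ∈ multiaffine R ι k := by
  classical
  induction hf using Submodule.span_induction with
  | mem f hf =>
    obtain ⟨U, hU, rfl⟩ := hf
    rw [translate_squarefreeMonomial]
    refine sum_mem fun T hT => Submodule.smul_mem _ _ (squarefreeMonomial_mem_multiaffine ?_)
    exact (card_le_card (mem_powerset.1 hT)).trans hU
  | zero => exact zero_mem _
  | add f g _ _ hf hg => exact add_mem hf hg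
  | smul c f _ hf => exact Submodule.smul_mem _ c hf

variable [DecidableEq ι]

lemma squarefreeMonomial_insert_sub_translate {i : ι} {T : Finset ι} (hi : i ∉ T) :
    squarefreeMonomial (insert i T) - τ (Pi.single i 1) (squarefreeMonomial (insert i T)) =
      (squarefreeMonomial T : (ι → R) → R) := by
  ext a
  have hT : ∏ j ∈ T, (a j - Pi.single (M := fun _ => R) i 1 j) = ∏ j ∈ T, a j :=
    prod_congr rfl fun j hj => by
      rw [Pi.single_eq_of_ne (ne_of_mem_of_not_mem hj hi), sub_zero]
  simp only [Pi.sub_apply, translate_apply, squarefreeMonomial, prod_insert hi, hT,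
    Pi.single_eq_same]
  ring

lemma multiaffine_le_of_translate_mem [Fintype ι] {k : ℕ} (hk : k ≤ Fintype.card ι)
    (F : Submodule R ((ι → R) → R)) (hF : ∀ i, ∀ f ∈ F, τ (Pi.single i 1) f ∈ F)
    (htop : ∀ S : Finset ι, #S = k → squarefreeMonomial S ∈ F) : multiaffine R ι k ≤ F := by
  rw [multiaffine, Submodule.span_le]
  rintro _ ⟨S, hS, rfl⟩
  induction hd : k - #S generalizing S with
  | zero => exact htop S (le_antisymm hS (Nat.sub_eq_zero_iff_le.1 hd))
  | succ d ih =>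
    obtain ⟨i, hi⟩ : ∃ i, i ∉ S := by
      by_contra! h
      have hcard : #S = Fintype.card ι := (card_eq_iff_eq_univ S).2 (eq_univ_iff_forall.2 h)
      omega
    have hinsert : squarefreeMonomial (insert i S) ∈ F := by
      have hcard := card_insert_of_notMem hi
      exact ih (insert i S) (by rw [Set.mem_ofPred_eq]; omega) (by omega)
    rw [← squarefreeMonomial_insert_sub_translate hi]
    exact sub_mem hinsert (hF i _ hinsert)

variable (R) in
/-- The coefficient of `squarefreeMonomial S` in a multiaffine function, recovered by Möbius
inversion from the values at the indicator vectors of the subsets of `S`. -/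
def moebiusCoeff (S : Finset ι) : ((ι → R) → R) →ₗ[R] R :=
  ∑ T ∈ S.powerset, (-1 : R) ^ #T • LinearMap.proj fun i => if i ∈ S \ T then 1 else 0

lemma moebiusCoeff_squarefreeMonomial (S U : Finset ι) :
    moebiusCoeff R S (squarefreeMonomial U) = if U = S then 1 else 0 := by
  simp only [moebiusCoeff, LinearMap.sum_apply, LinearMap.smul_apply, LinearMap.proj_apply,
    squarefreeMonomial, smul_eq_mul, prod_boole]
  by_cases hUS : U ⊆ S
  · calc ∑ T ∈ S.powerset, (-1 : R) ^ #T * (if ∀ i ∈ U, i ∈ S \ T then 1 else 0)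
        = ∑ T ∈ S.powerset,
            (-1 : R) ^ #T * (∏ _i ∈ S \ T, 1) * ∏ i ∈ T, if i ∉ U then 1 else 0 := by
          refine sum_congr rfl fun T _ => ?_
          have hdisj : (∀ i ∈ U, i ∈ S \ T) ↔ ∀ i ∈ T, i ∉ U := by grind
          simp only [hdisj, prod_const_one, mul_one, prod_boole]
      _ = ∏ i ∈ S, (1 - if i ∉ U then 1 else 0) := (prod_sub _ _ _).symm
      _ = ∏ i ∈ S, if i ∈ U then 1 else 0 :=
          prod_congr rfl fun i _ => by split_ifs <;> simp_all
      _ = if U = S then 1 else 0 := by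
          rw [prod_boole]
          exact if_congr ⟨fun h => hUS.antisymm h, fun h => h.ge⟩ rfl rfl
  · have hUT (T : Finset ι) : ¬∀ i ∈ U, i ∈ S \ T := fun h => hUS (Subset.trans h sdiff_subset)
    have hne : U ≠ S := fun h => hUS h.le
    simp only [hUT, hne, if_false, mul_zero, sum_const_zero]

lemma moebiusCoeff_translate {S : Finset ι} (b : ι → R) {f : (ι → R) → R}
    (hf : f ∈ multiaffine R ι #S) : moebiusCoeff R S (τ b f) = moebiusCoeff R S f := by
  induction hf using Submodule.span_induction with
  | mem f hf =>
    obtain ⟨U, hU : #U ≤ #S, rfl⟩ := hf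
    have hSU : S ⊆ U ↔ U = S :=
      ⟨fun h => (eq_of_subset_of_card_le h hU).symm, fun h => h.ge⟩
    simp only [translate_squarefreeMonomial, map_sum, map_smul, moebiusCoeff_squarefreeMonomial,
      smul_eq_mul, mul_ite, mul_one, mul_zero, sum_ite_eq', mem_powerset, hSU]
    split_ifs with h
    · simp [h, squarefreeMonomial]
    · rfl
  | zero => simp
  | add f g _ _ hf hg => rw [translate_add_right, map_add, map_add, hf, hg]
  | smul c f _ hf => rw [translate_smul_right, map_smul, map_smul, hf]

variable (R ι) in
/-- The coefficients of the squarefree monomials of degree `k`. -/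
def leadingCoeffs (k : ℕ) : ((ι → R) → R) →ₗ[R] ({S : Finset ι // #S = k} → R) :=
  LinearMap.pi fun S => moebiusCoeff R S.1

lemma leadingCoeffs_translate {k : ℕ} (b : ι → R) {f : (ι → R) → R}
    (hf : f ∈ multiaffine R ι k) : leadingCoeffs R ι k (τ b f) = leadingCoeffs R ι k f :=
  funext fun S => moebiusCoeff_translate b (S.2.symm ▸ hf)

lemma exists_mem_multiaffine_leadingCoeffs_eq [Finite ι] {k : ℕ}
    (c : {S : Finset ι // #S = k} → R) : ∃ f ∈ multiaffine R ι k, leadingCoeffs R ι k f = c := by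
  cases nonempty_fintype ι
  refine ⟨∑ S, c S • squarefreeMonomial S.1, sum_mem fun S _ =>
    Submodule.smul_mem _ _ (squarefreeMonomial_mem_multiaffine S.2.le), funext fun S => ?_⟩
  simp [leadingCoeffs, moebiusCoeff_squarefreeMonomial, ← Subtype.ext_iff]

end Multiaffine

section MultiaffineGroup

/-- The group `C ⋊ (ι → ZMod n)`, with `C` the multiaffine functions of degree at most `k`. For
`n = 2` and `2 * k - 1` variables, `C` is the power `k - 1` of the radical of the group algebra. -/
def multiaffineGroup (n : ℕ) (ι : Type*) (k : ℕ) :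
    Subgroup (Equiv.Perm ((ι → ZMod n) × ZMod n)) :=
  skewTranslationGroup (multiaffine (ZMod n) ι k).toAddSubgroup
    fun b _ hf => translate_mem_multiaffine b hf

lemma isPretransitive_multiaffineGroup (n : ℕ) (ι : Type*) (k : ℕ) :
    MulAction.IsPretransitive (multiaffineGroup n ι k) ((ι → ZMod n) × ZMod n) :=
  isPretransitive_skewTranslationGroup _ (const_mem_multiaffine k)

lemma isPGroup_multiaffineGroup (p : ℕ) (ι : Type*) (k : ℕ) :
    IsPGroup p (multiaffineGroup p ι k) :=
  isPGroup_skewTranslationGroup _ p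

variable {n : ℕ} {ι : Type*} {k : ℕ}

variable (n ι k) in
/-- The generators of `multiaffineGroup n ι k`: the coordinate translations of the base and the
fibrewise translations by the squarefree monomials of degree `k`. -/
def multiaffineGenerator [DecidableEq ι] :
    ι ⊕ {S : Finset ι // #S = k} → Equiv.Perm ((ι → ZMod n) × ZMod n) :=
  Sum.elim (fun i => skewTranslation (Pi.single i 1) 0)
    fun S => skewTranslation 0 (squarefreeMonomial S.1)

lemma closure_range_multiaffineGenerator [Fintype ι] [DecidableEq ι] (hk : k ≤ Fintype.card ι) :
    Subgroup.closure (Set.range (multiaffineGenerator n ι k)) = multiaffineGroup n ι k := by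
  apply le_antisymm
  · rw [Subgroup.closure_le]
    rintro _ ⟨i | S, rfl⟩
    · exact skewTranslation_mem _ _ (zero_mem _)
    · exact skewTranslation_mem _ _ (squarefreeMonomial_mem_multiaffine S.2.le)
  set H := Subgroup.closure (Set.range (multiaffineGenerator n ι k))
  let B := AddSubgroup.toZModSubmodule n (Subgroup.toAddSubgroup' (H.comap baseTranslation))
  let F := AddSubgroup.toZModSubmodule n (Subgroup.toAddSubgroup' (H.comap fiberTranslation))
  have hB : B = ⊤ := by
    rw [eq_top_iff, ← (Pi.basisFun (ZMod n) ι).span_eq, Submodule.span_le]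
    rintro _ ⟨i, rfl⟩
    rw [Pi.basisFun_apply]
    exact Subgroup.subset_closure ⟨Sum.inl i, rfl⟩
  have hbase (b : ι → ZMod n) : skewTranslation b 0 ∈ H := hB.ge (Submodule.mem_top (x := b))
  have htranslate (b : ι → ZMod n) {f : (ι → ZMod n) → ZMod n} (hf : f ∈ F) : τ b f ∈ F := by
    have hconj := mul_mem (mul_mem (hbase b) (show skewTranslation 0 f ∈ H from hf))
      (inv_mem (hbase b))
    rwa [skewTranslation_conj] at hconj
  have hF : multiaffine (ZMod n) ι k ≤ F :=
    multiaffine_le_of_translate_mem hk F (fun i _ hf => htranslate (Pi.single i 1) hf)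
      fun S hS => Subgroup.subset_closure ⟨Sum.inr ⟨S, hS⟩, rfl⟩
  rintro _ ⟨b, f, hf, rfl⟩
  rw [← skewTranslation_zero_mul_skewTranslation]
  exact mul_mem (hF hf) (hbase b)

lemma rank_multiaffineGroup [Fintype ι] [NeZero n] [Nontrivial (ZMod n)]
    (hk : k ≤ Fintype.card ι) :
    Group.rank (multiaffineGroup n ι k) = (Fintype.card ι).choose k + Fintype.card ι := by
  classical
  have hcard : Fintype.card (ι ⊕ {S : Finset ι // #S = k}) =
      (Fintype.card ι).choose k + Fintype.card ι := by
    rw [Fintype.card_sum, Fintype.card_finset_len, add_comm]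
  apply le_antisymm
  · calc Group.rank (multiaffineGroup n ι k)
        = Group.rank (Subgroup.closure (Set.range (multiaffineGenerator n ι k))) :=
          Subgroup.rank_congr (closure_range_multiaffineGenerator hk).symm
      _ ≤ Nat.card (Set.range (multiaffineGenerator n ι k)) :=
          Subgroup.rank_closure_finite_le_nat_card _
      _ ≤ Nat.card (ι ⊕ {S : Finset ι // #S = k}) := Finite.card_range_le _
      _ = (Fintype.card ι).choose k + Fintype.card ι := by rw [Nat.card_eq_fintype_card, hcard]
  · let φ : multiaffineGroup n ι k →*
        Multiplicative ((ι → ZMod n) × ({S : Finset ι // #S = k} → ZMod n)) :=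
      coinvariantHom _ (leadingCoeffs (ZMod n) ι k).toAddMonoidHom
        fun b _ hf => leadingCoeffs_translate b hf
    have hφ : Function.Surjective φ :=
      coinvariantHom_surjective _ _ _ exists_mem_multiaffine_leadingCoeffs_eq
    calc (Fintype.card ι).choose k + Fintype.card ι
        = Module.finrank (ZMod n) ((ι → ZMod n) × ({S : Finset ι // #S = k} → ZMod n)) := by
          rw [Module.finrank_prod, Module.finrank_pi, Module.finrank_pi, ← Fintype.card_sum, hcard]
      _ ≤ Group.rank (multiaffineGroup n ι k) := finrank_le_rank_of_surjective (ZMod n) φ hφ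

end MultiaffineGroup

lemma isPretransitive_map_permCongrHom {α β : Type*} (e : α ≃ β) (G : Subgroup (Equiv.Perm α))
    [MulAction.IsPretransitive G α] :
    MulAction.IsPretransitive (G.map (e.permCongrHom : Equiv.Perm α →* Equiv.Perm β)) β where
  exists_smul_eq x y := by
    obtain ⟨g, hg⟩ := MulAction.exists_smul_eq G (e.symm x) (e.symm y)
    refine ⟨⟨_, Subgroup.mem_map_of_mem _ g.2⟩, ?_⟩
    change e (g.1 (e.symm x)) = y
    exact e.eq_symm_apply.1 hg

lemma exists_isPretransitive_isPGroup_dGen_eq (p : ℕ) [Fact p.Prime] {m k : ℕ} (hk : k ≤ m)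
    {Ω : Type*} (hΩ : Nat.card Ω = p ^ (m + 1)) :
    ∃ G : Subgroup (Equiv.Perm Ω), MulAction.IsPretransitive G Ω ∧ IsPGroup p G ∧
      dGen G = m.choose k + m := by
  have hcard : Nat.card ((Fin m → ZMod p) × ZMod p) = Nat.card Ω := by
    rw [hΩ, Nat.card_prod, Nat.card_fun, Nat.card_zmod, Nat.card_fin, pow_succ]
  have : Finite Ω := Nat.finite_of_card_ne_zero (hΩ ▸ pow_ne_zero _ (NeZero.ne p))
  obtain ⟨e⟩ := Finite.card_eq.1 hcard
  let E := e.permCongrHom.subgroupMap (multiaffineGroup p (Fin m) k)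
  have := isPretransitive_multiaffineGroup p (Fin m) k
  refine ⟨_, isPretransitive_map_permCongrHom e (multiaffineGroup p (Fin m) k),
    (isPGroup_multiaffineGroup p (Fin m) k).of_equiv E, ?_⟩
  rw [dGen_eq_rank, ← Group.rank_congr E, rank_multiaffineGroup (by simpa), Fintype.card_fin]

section CentralBinom

open Filter Real Topology

lemma centralBinom_mul_sqrt_div_four_pow (k : ℕ) :
    Nat.centralBinom k * √(2 * k) / 4 ^ k = √(k / (k + 1 / 2) / Wallis.W k) := by
  have hfac : (Nat.centralBinom k : ℝ) * k.factorial ^ 2 = (2 * k).factorial := by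
    have hnat := Nat.choose_mul_factorial_mul_factorial (Nat.le_mul_of_pos_left k two_pos)
    rw [two_mul, Nat.add_sub_cancel, ← two_mul, ← Nat.centralBinom_eq_two_mul_choose, mul_assoc,
      ← sq] at hnat
    exact mod_cast hnat
  have hsq : k / (k + 1 / 2) / Wallis.W k = (Nat.centralBinom k / 4 ^ k : ℝ) ^ 2 * (2 * k) := by
    have hpow : (2 : ℝ) ^ (4 * k) = (4 ^ k) ^ 2 := by
      rw [← pow_mul, show (4 : ℝ) = 2 ^ 2 by norm_num, ← pow_mul]
      ring_nf
    rw [Wallis.W_eq_factorial_ratio, ← hfac, hpow]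
    field_simp
  rw [hsq, sqrt_mul (sq_nonneg _), sqrt_sq (by positivity)]
  ring

lemma tendsto_centralBinom_mul_sqrt_div_four_pow :
    Tendsto (fun k : ℕ => Nat.centralBinom k * √(2 * k) / 4 ^ k) atTop (𝓝 √(2 / π)) := by
  simp only [centralBinom_mul_sqrt_div_four_pow]
  have hlim := (tendsto_natCast_div_add_atTop (1 / 2 : ℝ)).div Wallis.tendsto_W_nhds_pi_div_two
    (by positivity)
  rw [one_div_div] at hlim
  exact hlim.sqrt

lemma eventually_mul_two_pow_div_le_choose {c : ℝ} (hc : c < √(2 / π)) :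
    ∀ᶠ k : ℕ in atTop, c * 2 ^ (2 * k) / √(2 * k) ≤ (2 * k).choose k := by
  filter_upwards [tendsto_centralBinom_mul_sqrt_div_four_pow.eventually_const_le hc,
    eventually_gt_atTop 0] with k hk hpos
  have hsqrt : 0 < √(2 * k : ℝ) := by positivity
  rw [le_div_iff₀ (by positivity), Nat.centralBinom_eq_two_mul_choose] at hk
  rwa [div_le_iff₀ hsqrt, pow_mul, show (2 : ℝ) ^ 2 = 4 by norm_num]

end CentralBinom

lemma two_mul_choose_pred (k : ℕ) (hk : 1 ≤ k) :
    2 * (2 * k - 1).choose (k - 1) = (2 * k).choose k := by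
  obtain ⟨j, rfl⟩ := Nat.exists_eq_add_of_le' hk
  rw [show 2 * (j + 1) = 2 * j + 1 + 1 by ring, Nat.choose_succ_succ, Nat.choose_symm_half]
  simp [two_mul]

/-- For every integer `k ≥ 1` there exists a transitive permutation group `G` of degree
`2^(2k)` which is a `2`-group and satisfies
`d(G) = binom(2k−1, k−1) + 2k − 1 = (1/2)·binom(2k, k) + 2k − 1`.  Consequently, for every
`ε > 0` and all sufficiently large `k`, such a group satisfies
`d(G) ≥ (√(2/π) − ε)·2^(2k)/(2·√(2k)) + 2k − 1`. -/
theorem stmt_19 :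
    (∀ k : ℕ, 1 ≤ k →
      ∃ G : Subgroup (Equiv.Perm (Fin (2 ^ (2 * k)))),
        MulAction.IsPretransitive G (Fin (2 ^ (2 * k))) ∧ IsPGroup 2 G ∧
        dGen G = (2 * k - 1).choose (k - 1) + 2 * k - 1 ∧
        (dGen G : ℝ) = (1 / 2) * (2 * k).choose k + 2 * k - 1) ∧
    ∀ ε : ℝ, 0 < ε → ∃ k₀ : ℕ, ∀ k : ℕ, k₀ ≤ k → 1 ≤ k →
      ∃ G : Subgroup (Equiv.Perm (Fin (2 ^ (2 * k)))),
        MulAction.IsPretransitive G (Fin (2 ^ (2 * k))) ∧ IsPGroup 2 G ∧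
        dGen G = (2 * k - 1).choose (k - 1) + 2 * k - 1 ∧
        (dGen G : ℝ) = (1 / 2) * (2 * k).choose k + 2 * k - 1 ∧
        (Real.sqrt (2 / Real.pi) - ε) * 2 ^ (2 * k) / (2 * Real.sqrt (2 * k)) + 2 * k - 1 ≤
          (dGen G : ℝ) := by
  have hexists (k : ℕ) (hk : 1 ≤ k) : ∃ G : Subgroup (Equiv.Perm (Fin (2 ^ (2 * k)))),
      MulAction.IsPretransitive G (Fin (2 ^ (2 * k))) ∧ IsPGroup 2 G ∧
      dGen G = (2 * k - 1).choose (k - 1) + 2 * k - 1 ∧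
      (dGen G : ℝ) = (1 / 2) * (2 * k).choose k + 2 * k - 1 := by
    obtain ⟨G, htrans, hG, hd⟩ := exists_isPretransitive_isPGroup_dGen_eq 2
      (show k ≤ 2 * k - 1 by omega) (Ω := Fin (2 ^ (2 * k))) (by grind [Nat.card_fin])
    rw [Nat.choose_symm_of_eq_add (show 2 * k - 1 = k + (k - 1) by omega)] at hd
    refine ⟨G, htrans, hG, by omega, ?_⟩
    have hadd : 2 * dGen G + 2 = (2 * k).choose k + 4 * k := by
      rw [← two_mul_choose_pred k hk]
      omega
    linarith [show (2 * dGen G + 2 : ℝ) = (2 * k).choose k + 4 * k from mod_cast hadd]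
  refine ⟨hexists, fun ε hε => ?_⟩
  obtain ⟨k₀, hk₀⟩ :=
    Filter.eventually_atTop.1 (eventually_mul_two_pow_div_le_choose (sub_lt_self _ hε))
  refine ⟨k₀, fun k hk₀k hk => ?_⟩
  obtain ⟨G, htrans, hG, hd, hreal⟩ := hexists k hk
  refine ⟨G, htrans, hG, hd, hreal, ?_⟩
  rw [hreal, mul_comm 2 √(2 * k : ℝ), ← div_div]
  linarith [hk₀ k hk₀k]
end
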